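/- arXiv:2003.09102 — 2 statements merged into one kernel-verified Lean document; each statement's English description precedes it below -/
import Mathlib

section
/- Fix an integer k ≥ 1 and a real ε with 0 < ε < 1/3. There is a constant C = C(k,ε) such that for all distinct primes p_1, …, p_k ≥ 5 and all real X ≥ 2 with p_1⋯p_k ≤ X^{1/3−ε}, the number of pairs (A,B) ∈ E(X) with p_i ∤ 4A³+27B² for every i (good reduction at all of p_1,…,p_k) differs from ∏_{i=1}^{k} ((p_i−1)/p_i)·(p_i^{10}/(p_i^{10}−1)) · (4/ζ(10))·X^{5/6} by at most C·(∏_{i=1}^{k}(p_i−1))·X^{1/2}, where ζ is the Riemann zeta function. -/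
/-- Condition (M): for every prime `q`, `q⁴ ∣ A` implies `q⁶ ∤ B`. -/
def CondM (A B : ℤ) : Prop := ∀ q : ℕ, q.Prime → (q : ℤ) ^ 4 ∣ A → ¬ (q : ℤ) ^ 6 ∣ B

/-- The family `E(X)`: pairs `(A,B)` with `4A³+27B² ≠ 0`, naive height at most `X`,
satisfying condition (M). -/
def Efam (X : ℝ) : Set (ℤ × ℤ) :=
  {AB | 4 * AB.1 ^ 3 + 27 * AB.2 ^ 2 ≠ 0 ∧ ((max (|AB.1| ^ 3) (AB.2 ^ 2) : ℤ) : ℝ) ≤ X ∧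
        CondM AB.1 AB.2}

/-!
Put `P = ∏ pᵢ` and `X = W ^ 12`, so that the height condition reads `|A| ≤ W ^ 4`, `|B| ≤ W ^ 6`.
A pair `(A, B)` with `4A³ + 27B² ≠ 0` satisfies (M) iff the only `d ≥ 1` with `d⁴ ∣ A`, `d⁶ ∣ B` is
`d = 1`, which is detected by summing `μ d` over these `d`. When the discriminant is prime to `P`,
so is `d`, and dividing out `(d⁴, d⁶)` leaves a count of pairs with discriminant prime to `P` in a
box with sides of half-length `(W / d) ^ 4` and `(W / d) ^ 6`.

Modulo a prime `p ≥ 5` the singular pairs are the `(-3t², 2t³)`, one for each `t`, so there are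
`p (p - 1)` good pairs, hence `P φ(P)` modulo `P`. Counting each residue class in the box separately
gives the main term `φ(P) / P * 4 * W ^ 10 * ∑ μ d / d ^ 10` over `d` prime to `P`, and the sum is
the inverse of `ζ(10)` with the Euler factors at the `pᵢ` removed. The error is
`O(φ(P) (W ^ 6 + P W))`, in which the second term is harmless as long as `P ≤ W ^ 5 = X ^ (5 / 12)`.
-/

open Finset
open scoped ArithmeticFunction.Moebius

/-- The quantity `4a³ + 27b²` attached to `(a, b)`: up to the factor `-16`, the discriminant of
`y² = x³ + ax + b`. -/
def disc {R : Type*} [CommRing R] (s : R × R) : R := 4 * s.1 ^ 3 + 27 * s.2 ^ 2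

/-- The pairs `(a, b)` over `R` for which `y² = x³ + ax + b` has unit discriminant, provided `2` is
a unit of `R`. -/
def unitDiscPairs (R : Type*) [CommRing R] : Set (R × R) := {s | IsUnit (disc s)}

section LocalCount

variable {R S : Type*} [CommRing R] [CommRing S]

theorem map_disc (f : R →+* S) (s : R × R) : f (disc s) = disc (f s.1, f s.2) := by
  simp only [disc, map_add, map_mul, map_pow, map_ofNat]

theorem disc_weighted_scale (u : R) (s : R × R) :
    disc (u ^ 4 * s.1, u ^ 6 * s.2) = u ^ 12 * disc s := by
  simp only [disc]
  ring

theorem dvd_disc {u : R} {s : R × R} (h₁ : u ∣ s.1) (h₂ : u ∣ s.2) : u ∣ disc s :=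
  dvd_add ((dvd_pow h₁ three_ne_zero).mul_left 4) ((dvd_pow h₂ two_ne_zero).mul_left 27)

theorem ncard_unitDiscPairs_congr (e : R ≃+* S) :
    (unitDiscPairs R).ncard = (unitDiscPairs S).ncard := by
  refine Nat.card_congr ((e.toEquiv.prodCongr e.toEquiv).subtypeEquiv fun s ↦ ?_)
  change IsUnit (disc s) ↔ IsUnit (disc (e s.1, e s.2))
  rw [← MulEquiv.isUnit_map e]
  exact iff_of_eq (congrArg IsUnit (map_disc (e : R →+* S) s))

theorem ncard_unitDiscPairs_prod :
    (unitDiscPairs (R × S)).ncard = (unitDiscPairs R).ncard * (unitDiscPairs S).ncard := by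
  rw [← Set.ncard_prod]
  refine Nat.card_congr ((Equiv.prodProdProdComm R S R S).subtypeEquiv fun s ↦ ?_)
  exact Prod.isUnit_iff

variable {F : Type*} [Field F]

/- A singular cubic `x³ + ax + b` is `(x - t)²(x + 2t)` for a unique `t`. -/
theorem range_eq_setOf_disc_eq_zero (h₂ : (2 : F) ≠ 0) (h₃ : (3 : F) ≠ 0) :
    Set.range (fun t : F ↦ (-3 * t ^ 2, 2 * t ^ 3)) = {s | disc s = 0} := by
  ext ⟨a, b⟩
  simp only [Set.mem_range, Prod.mk.injEq, Set.mem_ofPred_eq, disc]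
  constructor
  · rintro ⟨t, rfl, rfl⟩
    ring
  intro h
  rcases eq_or_ne a 0 with rfl | ha
  · have h27 : (27 : F) ≠ 0 := by
      simpa only [show (27 : F) = 3 ^ 3 by norm_num] using pow_ne_zero 3 h₃
    have hb : b = 0 := by simpa [h27] using h
    exact ⟨0, by simp, by simp [hb]⟩
  · refine ⟨-3 * b / (2 * a), ?_, ?_⟩
    · field_simp
      linear_combination (-1) * h
    · field_simp
      linear_combination (-b) * h

theorem injective_neg_three_mul_sq_two_mul_cube (h₂ : (2 : F) ≠ 0) (h₃ : (3 : F) ≠ 0) :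
    Function.Injective (fun t : F ↦ (-3 * t ^ 2, 2 * t ^ 3)) := by
  intro t u htu
  obtain ⟨hsq, hcube⟩ := Prod.mk.inj htu
  replace hsq : t ^ 2 = u ^ 2 := mul_left_cancel₀ (neg_ne_zero.mpr h₃) hsq
  replace hcube : t ^ 3 = u ^ 3 := mul_left_cancel₀ h₂ hcube
  rcases eq_or_ne u 0 with rfl | hu
  · simpa using hsq
  · refine mul_left_cancel₀ (pow_ne_zero 2 hu) ?_
    calc u ^ 2 * t = t ^ 3 := by rw [← hsq]; ring
      _ = u ^ 2 * u := by rw [hcube]; ring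

theorem ncard_unitDiscPairs_of_field [Finite F] (h₂ : (2 : F) ≠ 0) (h₃ : (3 : F) ≠ 0) :
    (unitDiscPairs F).ncard = Nat.card F * (Nat.card F - 1) := by
  have hcompl : unitDiscPairs F = {s | disc s = 0}ᶜ := by
    ext s
    exact isUnit_iff_ne_zero
  have hsing : {s : F × F | disc s = 0}.ncard = Nat.card F := by
    rw [← range_eq_setOf_disc_eq_zero h₂ h₃]
    exact Nat.card_range_of_injective (injective_neg_three_mul_sq_two_mul_cube h₂ h₃)
  rw [hcompl, Set.ncard_compl, hsing, Nat.card_prod, Nat.mul_sub_one]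

theorem ncard_unitDiscPairs_zmod {P : ℕ} (hP : Squarefree P) (h6 : P.Coprime 6) :
    (unitDiscPairs (ZMod P)).ncard = P * P.totient := by
  induction P using Nat.recOnPosPrimePosCoprime with
  | zero => exact absurd hP not_squarefree_zero
  | one =>
    have huniv : unitDiscPairs (ZMod 1) = Set.univ :=
      Set.eq_univ_of_forall fun _ ↦ isUnit_of_subsingleton _
    rw [huniv, Set.ncard_univ, Nat.card_prod, Nat.card_zmod, Nat.totient_one]
  | prime_pow p n hp hn =>
    obtain rfl : n = 1 := ((Nat.squarefree_pow_iff hp.ne_one hn.ne').mp hP).2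
    rw [pow_one] at h6 ⊢
    have : Fact p.Prime := ⟨hp⟩
    have ne_zero {m : ℕ} (hm : m ∣ 6) : (m : ZMod p) ≠ 0 :=
      ((ZMod.isUnit_iff_coprime m p).mpr (h6.symm.coprime_dvd_left hm)).ne_zero
    rw [ncard_unitDiscPairs_of_field (mod_cast ne_zero (by norm_num : 2 ∣ 6))
      (mod_cast ne_zero (by norm_num : 3 ∣ 6)), Nat.card_zmod, Nat.totient_prime hp]
  | coprime a b _ _ hab iha ihb =>
    obtain ⟨hPa, hPb⟩ := (Nat.squarefree_mul hab).mp hP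
    rw [ncard_unitDiscPairs_congr (ZMod.chineseRemainder hab), ncard_unitDiscPairs_prod,
      iha hPa h6.coprime_mul_right, ihb hPb h6.coprime_mul_left, Nat.totient_mul hab]
    ring

end LocalCount

section BoxCount

/-- The integers of absolute value at most `U`. -/
noncomputable def intBall (U : ℝ) : Finset ℤ := Icc (-⌊U⌋) ⌊U⌋

theorem mem_intBall {U : ℝ} {a : ℤ} : a ∈ intBall U ↔ |(a : ℝ)| ≤ U := by
  rw [intBall, mem_Icc, neg_le, Int.le_floor, Int.le_floor, abs_le', and_comm]
  push_cast
  rfl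

theorem intBall_eq_Ioc (U : ℝ) : intBall U = Ioc (-⌊U⌋ - 1) ⌊U⌋ := by
  ext a
  simp only [intBall, mem_Icc, mem_Ioc]
  omega

theorem card_intBall_le {U : ℝ} (hU : 0 ≤ U) : (#(intBall U) : ℝ) ≤ 2 * U + 1 := by
  have hfloor : 0 ≤ ⌊U⌋ := Int.floor_nonneg.mpr hU
  have hcard : (#(intBall U) : ℤ) = 2 * ⌊U⌋ + 1 := by
    rw [intBall, Int.card_Icc, Int.toNat_of_nonneg (by omega)]
    ring
  have hcard' : (#(intBall U) : ℝ) = 2 * ⌊U⌋ + 1 := mod_cast hcard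
  linarith [Int.floor_le U]

theorem abs_card_Ioc_filter_modEq_sub_le {a b r : ℤ} (hab : a ≤ b) (hr : 0 < r) (v : ℤ) :
    |(#{x ∈ Ioc a b | x ≡ v [ZMOD r]} : ℝ) - (b - a) / r| ≤ 1 := by
  set y : ℚ := (b - v) / r with hy
  set x : ℚ := (a - v) / r with hx
  have hxy : x ≤ y :=
    div_le_div_of_nonneg_right (sub_le_sub_right (mod_cast hab) _) (mod_cast hr.le)
  have hcard : (#{x ∈ Ioc a b | x ≡ v [ZMOD r]} : ℤ) = ⌊y⌋ - ⌊x⌋ := by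
    rw [Int.Ioc_filter_modEq_card a b hr, max_eq_left (sub_nonneg.mpr (Int.floor_mono hxy))]
  have hcard' : (#{x ∈ Ioc a b | x ≡ v [ZMOD r]} : ℚ) = ⌊y⌋ - ⌊x⌋ := mod_cast hcard
  have hdiff : ((b - a) / r : ℚ) = y - x := by
    rw [hx, hy]
    ring
  have hbound : |(#{x ∈ Ioc a b | x ≡ v [ZMOD r]} : ℚ) - (b - a) / r| ≤ 1 := by
    rw [hcard', hdiff, abs_le]
    constructor <;>
      linarith [Int.floor_le x, Int.floor_le y, Int.lt_floor_add_one x, Int.lt_floor_add_one y]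
  exact_mod_cast hbound

theorem abs_card_intBall_filter_modEq_sub_le {P : ℕ} (hP : 0 < P) {U : ℝ} (hU : 0 ≤ U) (r : ℤ) :
    |(#{a ∈ intBall U | a ≡ r [ZMOD P]} : ℝ) - 2 * U / P| ≤ 2 := by
  have hfloor : 0 ≤ ⌊U⌋ := Int.floor_nonneg.mpr hU
  have hP1 : (1 : ℝ) ≤ P := mod_cast hP
  have hcount := abs_card_Ioc_filter_modEq_sub_le (a := -⌊U⌋ - 1) (b := ⌊U⌋) (by omega)
    (mod_cast hP : (0 : ℤ) < P) r
  have hround : |((⌊U⌋ - (-⌊U⌋ - 1 : ℤ) : ℝ) / (P : ℤ)) - 2 * U / P| ≤ 1 := by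
    push_cast
    rw [← sub_div, abs_div, Nat.abs_cast]
    refine div_le_one_of_le₀ (le_trans ?_ hP1) (by positivity)
    rw [abs_le]
    constructor <;> linarith [Int.floor_le U, Int.lt_floor_add_one U]
  rw [intBall_eq_Ioc]
  linarith [abs_sub_le (#{a ∈ Ioc (-⌊U⌋ - 1) ⌊U⌋ | a ≡ r [ZMOD P]} : ℝ)
    ((⌊U⌋ - (-⌊U⌋ - 1 : ℤ)) / (P : ℤ)) (2 * U / P)]

theorem abs_mul_sub_mul_le {x y u v c : ℝ} (hx : |x - u| ≤ c) (hy : |y - v| ≤ c) :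
    |x * y - u * v| ≤ c * (|u| + |v| + c) := by
  have hc : 0 ≤ c := (abs_nonneg _).trans hx
  calc |x * y - u * v| = |(x - u) * (y - v) + u * (y - v) + (x - u) * v| := by ring_nf
    _ ≤ |x - u| * |y - v| + |u| * |y - v| + |x - u| * |v| := by
      simpa only [abs_mul] using abs_add_three ((x - u) * (y - v)) (u * (y - v)) ((x - u) * v)
    _ ≤ c * c + |u| * c + c * |v| := by gcongr
    _ = c * (|u| + |v| + c) := by ring

open scoped Classical in
theorem card_filter_intCast_mem_eq_sum {P : ℕ} (S : Finset (ZMod P × ZMod P)) (I J : Finset ℤ) :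
    #{ab ∈ I ×ˢ J | ((ab.1 : ZMod P), (ab.2 : ZMod P)) ∈ S} =
      ∑ s ∈ S, #{a ∈ I | a ≡ s.1.cast [ZMOD P]} * #{b ∈ J | b ≡ s.2.cast [ZMOD P]} := by
  have hmaps : ∀ ab ∈ {ab ∈ I ×ˢ J | ((ab.1 : ZMod P), (ab.2 : ZMod P)) ∈ S},
      ((ab.1 : ZMod P), (ab.2 : ZMod P)) ∈ S := fun ab hab ↦ (mem_filter.mp hab).2
  rw [card_eq_sum_card_fiberwise hmaps]
  refine sum_congr rfl fun s hs ↦ ?_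
  rw [← card_product]
  congr 1
  ext ⟨a, b⟩
  simp only [mem_filter, mem_product, ← ZMod.intCast_eq_intCast_iff, ZMod.intCast_zmod_cast,
    Prod.ext_iff]
  grind

open scoped Classical in
theorem abs_card_box_filter_intCast_mem_sub_le {P : ℕ} (hP : 0 < P) (S : Set (ZMod P × ZMod P))
    {U V : ℝ} (hU : 0 ≤ U) (hV : 0 ≤ V) :
    |(#{ab ∈ intBall U ×ˢ intBall V | ((ab.1 : ZMod P), (ab.2 : ZMod P)) ∈ S} : ℝ) -
      S.ncard * (2 * U / P * (2 * V / P))| ≤ S.ncard * (2 * (2 * U / P + 2 * V / P + 2)) := by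
  have : NeZero P := ⟨hP.ne'⟩
  lift S to Finset (ZMod P × ZMod P) using S.toFinite
  simp only [mem_coe, Set.ncard_coe_finset]
  rw [card_filter_intCast_mem_eq_sum, ← nsmul_eq_mul, ← nsmul_eq_mul, ← sum_const, ← sum_const]
  push_cast
  rw [← sum_sub_distrib]
  refine (abs_sum_le_sum_abs _ _).trans (sum_le_sum fun s _ ↦ ?_)
  have h := abs_mul_sub_mul_le (abs_card_intBall_filter_modEq_sub_le hP hU s.1.cast)
    (abs_card_intBall_filter_modEq_sub_le hP hV s.2.cast)
  rwa [abs_of_nonneg (by positivity : 0 ≤ 2 * U / P),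
    abs_of_nonneg (by positivity : 0 ≤ 2 * V / P)] at h

end BoxCount

section Moebius

theorem exists_eq_divisors_of_lcm_mem {T : Finset ℕ} (h1 : 1 ∈ T) (h0 : 0 ∉ T)
    (hdvd : ∀ d ∈ T, ∀ e, e ∣ d → e ∈ T) (hlcm : ∀ d ∈ T, ∀ e ∈ T, d.lcm e ∈ T) :
    ∃ D ≠ 0, T = D.divisors := by
  have hlcm_mem : ∀ F ⊆ T, F.lcm id ∈ T := by
    intro F
    induction F using Finset.induction_on with
    | empty => exact fun _ ↦ h1
    | insert a F _ ih =>
      intro hF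
      rw [insert_subset_iff] at hF
      rw [lcm_insert]
      exact hlcm _ hF.1 _ (ih hF.2)
  have hD : T.lcm id ∈ T := hlcm_mem T Subset.rfl
  have hD0 : T.lcm id ≠ 0 := ne_of_mem_of_not_mem hD h0
  refine ⟨T.lcm id, hD0, Finset.ext fun d ↦ ?_⟩
  rw [Nat.mem_divisors]
  exact ⟨fun hd ↦ ⟨dvd_lcm (f := id) hd, hD0⟩, fun hd ↦ hdvd _ hD _ hd.1⟩

theorem sum_divisors_moebius (D : ℕ) : ∑ d ∈ D.divisors, μ d = if D = 1 then 1 else 0 := by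
  rw [← ArithmeticFunction.coe_mul_zeta_apply, ArithmeticFunction.moebius_mul_coe_zeta,
    ArithmeticFunction.one_apply]

theorem natCast_lcm_pow_dvd {a b m : ℕ} {A : ℤ} (ha : (a : ℤ) ^ m ∣ A) (hb : (b : ℤ) ^ m ∣ A) :
    ((a.lcm b : ℕ) : ℤ) ^ m ∣ A := by
  rw [← Nat.cast_pow, Int.natCast_dvd] at *
  rw [← Nat.pow_lcm_pow]
  exact Nat.lcm_dvd ha hb

open scoped Classical in
theorem sum_moebius_filter_pow_dvd {A B : ℤ} {m n Y : ℕ}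
    (hY : ∀ d : ℕ, (d : ℤ) ^ m ∣ A → (d : ℤ) ^ n ∣ B → d ≤ Y) :
    ∑ d ∈ (Icc 1 Y).filter fun d : ℕ ↦ (d : ℤ) ^ m ∣ A ∧ (d : ℤ) ^ n ∣ B, μ d =
      if ∀ q : ℕ, q.Prime → (q : ℤ) ^ m ∣ A → ¬ (q : ℤ) ^ n ∣ B then 1 else 0 := by
  set T := (Icc 1 Y).filter fun d : ℕ ↦ (d : ℤ) ^ m ∣ A ∧ (d : ℤ) ^ n ∣ B
  have mem_T {d : ℕ} : d ∈ T ↔ d ≠ 0 ∧ (d : ℤ) ^ m ∣ A ∧ (d : ℤ) ^ n ∣ B := by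
    rw [mem_filter, mem_Icc, Nat.one_le_iff_ne_zero]
    exact ⟨fun h ↦ ⟨h.1.1, h.2⟩, fun h ↦ ⟨⟨h.1, hY d h.2.1 h.2.2⟩, h.2⟩⟩
  obtain ⟨D, hD0, hT⟩ : ∃ D ≠ 0, T = D.divisors := by
    refine exists_eq_divisors_of_lcm_mem ?_ ?_ ?_ ?_
    · simp [mem_T]
    · simp [mem_T]
    · intro d hd e hed
      obtain ⟨hd0, hdA, hdB⟩ := mem_T.mp hd
      have hed' : (e : ℤ) ∣ d := mod_cast hed
      exact mem_T.mpr ⟨ne_zero_of_dvd_ne_zero hd0 hed, (pow_dvd_pow_of_dvd hed' m).trans hdA,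
        (pow_dvd_pow_of_dvd hed' n).trans hdB⟩
    · intro d hd e he
      obtain ⟨hd0, hdA, hdB⟩ := mem_T.mp hd
      obtain ⟨he0, heA, heB⟩ := mem_T.mp he
      exact mem_T.mpr ⟨Nat.lcm_ne_zero hd0 he0, natCast_lcm_pow_dvd hdA heA,
        natCast_lcm_pow_dvd hdB heB⟩
  have hprime {q : ℕ} (hq : q.Prime) : q ∣ D ↔ (q : ℤ) ^ m ∣ A ∧ (q : ℤ) ^ n ∣ B := by
    rw [← and_iff_right (a := q ≠ 0) (b := _ ∧ _) hq.ne_zero, ← mem_T, hT, Nat.mem_divisors,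
      and_iff_left hD0]
  rw [hT, sum_divisors_moebius]
  congr 1
  rw [eq_iff_iff, Nat.eq_one_iff_not_exists_prime_dvd]
  exact forall₂_congr fun q hq ↦ by rw [hprime hq, not_and]

theorem natCast_le_of_pow_dvd {A : ℤ} (hA : A ≠ 0) {d m : ℕ} (hm : m ≠ 0) {W : ℝ} (hW : 0 ≤ W)
    (hd : (d : ℤ) ^ m ∣ A) (hAW : |(A : ℝ)| ≤ W ^ m) : (d : ℝ) ≤ W := by
  have hle : (d : ℤ) ^ m ≤ |A| := Int.le_of_dvd (abs_pos.mpr hA) ((dvd_abs _ _).mpr hd)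
  have hle' : (d : ℝ) ^ m ≤ |(A : ℝ)| := mod_cast hle
  exact le_of_pow_le_pow_left₀ hm hW (hle'.trans hAW)

end Moebius

section CoprimeMoebius

/-- The Möbius function restricted to the integers coprime to `P`. Its Dirichlet series is the
inverse of `ζ` with the Euler factors at the primes dividing `P` removed. -/
def coprimeMoebius (P d : ℕ) : ℤ := if d.Coprime P then μ d else 0

theorem abs_coprimeMoebius_le_one (P d : ℕ) : |(coprimeMoebius P d : ℝ)| ≤ 1 := by
  rw [coprimeMoebius]
  split_ifs
  · exact_mod_cast ArithmeticFunction.abs_moebius_le_one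
  · simp

theorem abs_coprimeMoebius_div_pow_le (P k d : ℕ) :
    |coprimeMoebius P d / (d : ℝ) ^ k| ≤ 1 / (d : ℝ) ^ k := by
  rw [abs_div, abs_of_nonneg (by positivity : (0 : ℝ) ≤ (d : ℝ) ^ k)]
  gcongr
  exact abs_coprimeMoebius_le_one P d

theorem trivialCharacter_mul_moebius {P : ℕ} (d : ℕ) :
    (1 : DirichletCharacter ℂ P) d * (μ d : ℂ) = coprimeMoebius P d := by
  rw [coprimeMoebius]
  split_ifs with hd
  · rw [MulChar.one_apply ((ZMod.isUnit_iff_coprime d P).mpr hd), one_mul]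
  · rw [MulChar.map_nonunit _ (mt (ZMod.isUnit_iff_coprime d P).mp hd), zero_mul, Int.cast_zero]

theorem LSeries_trivialCharacter_mul_moebius {P k : ℕ} (hk : k ≠ 0) :
    LSeries ((fun n : ℕ ↦ (1 : DirichletCharacter ℂ P) n) * fun n : ℕ ↦ (μ n : ℂ)) k =
      ((∑' d : ℕ, coprimeMoebius P d / (d : ℝ) ^ k : ℝ) : ℂ) := by
  rw [LSeries, Complex.ofReal_tsum]
  refine tsum_congr fun d ↦ ?_
  rcases eq_or_ne d 0 with rfl | hd
  · simp [hk]
  · rw [LSeries.term_of_ne_zero hd, Pi.mul_apply, trivialCharacter_mul_moebius,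
      Complex.cpow_natCast]
    push_cast
    rfl

theorem ofReal_re_riemannZeta_natCast {k : ℕ} (hk : 1 < k) :
    (((riemannZeta k).re : ℝ) : ℂ) = riemannZeta k := by
  have him : (riemannZeta k).im = 0 := mod_cast
    riemannZeta_im_eq_zero_of_one_lt (x := k) (mod_cast hk)
  exact Complex.ext rfl him.symm

theorem tsum_coprimeMoebius_div_pow {P k : ℕ} (hP : P ≠ 0) (hk : 1 < k) :
    ∑' d : ℕ, coprimeMoebius P d / (d : ℝ) ^ k =
      ((∏ p ∈ P.primeFactors, (1 - ((p : ℝ) ^ k)⁻¹)) * (riemannZeta k).re)⁻¹ := by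
  have : NeZero P := ⟨hP⟩
  have hk' : 1 < ((k : ℂ)).re := by simpa using hk
  have heuler : DirichletCharacter.LFunctionTrivChar P k =
      ((∏ p ∈ P.primeFactors, (1 - ((p : ℝ) ^ k)⁻¹) : ℝ) : ℂ) * riemannZeta k := by
    rw [DirichletCharacter.LFunctionTrivChar_eq_mul_riemannZeta (mod_cast hk.ne')]
    simp only [Complex.cpow_neg, Complex.cpow_natCast]
    push_cast
    rfl
  have hinv := DirichletCharacter.LSeries.mul_mu_eq_one (1 : DirichletCharacter ℂ P) hk'
  rw [← DirichletCharacter.LFunction_eq_LSeries _ hk', ← DirichletCharacter.LFunctionTrivChar,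
    heuler, LSeries_trivialCharacter_mul_moebius (by omega),
    ← ofReal_re_riemannZeta_natCast hk] at hinv
  exact eq_inv_of_mul_eq_one_right (mod_cast hinv)

theorem abs_tsum_sub_sum_Icc_le {f : ℕ → ℝ} {k Y : ℕ} {W : ℝ}
    (hf : ∀ d, |f d| ≤ 1 / (d : ℝ) ^ (k + 2)) (hW : 0 < W) (hWY : W ≤ Y + 1) :
    |∑' d, f d - ∑ d ∈ Icc 1 Y, f d| ≤ (∑' d : ℕ, 1 / (d : ℝ) ^ 2) / W ^ k := by
  have hsq : Summable fun d : ℕ ↦ 1 / (d : ℝ) ^ 2 := Real.summable_one_div_nat_pow.mpr one_lt_two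
  have hsum : Summable f :=
    .of_norm_bounded (Real.summable_one_div_nat_pow.mpr (by omega : 1 < k + 2)) hf
  have htail : ∀ d : ((Icc 1 Y : Finset ℕ) : Set ℕ)ᶜ.Elem,
      ‖f d‖ ≤ 1 / ((d : ℕ) : ℝ) ^ 2 / W ^ k := by
    rintro ⟨d, hd⟩
    refine (hf d).trans ?_
    rcases eq_or_ne d 0 with rfl | hd0
    · simp
    have hYd : Y + 1 ≤ d := by
      simp only [Set.mem_compl_iff, mem_coe, mem_Icc] at hd
      omega
    have hWd : W ≤ d := hWY.trans (mod_cast hYd)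
    rw [div_div, pow_add, mul_comm]
    gcongr
  rw [← hsum.sum_add_tsum_compl (s := Icc 1 Y), add_sub_cancel_left, ← Real.norm_eq_abs,
    ← tsum_div_const]
  have hmaj : Summable fun d : ℕ ↦ 1 / (d : ℝ) ^ 2 / W ^ k := hsq.div_const _
  exact (tsum_of_norm_bounded (hmaj.subtype _).hasSum htail).trans
    (hmaj.tsum_subtype_le _ _ fun d ↦ by positivity)

end CoprimeMoebius

section UnitDiscCount

variable {P : ℕ} {U V W : ℝ}

theorem intCast_mem_unitDiscPairs {s : ℤ × ℤ} :
    ((s.1 : ZMod P), (s.2 : ZMod P)) ∈ unitDiscPairs (ZMod P) ↔ IsCoprime (P : ℤ) (disc s) := by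
  rw [← ZMod.coe_int_isUnit_iff_isCoprime]
  exact iff_of_eq (congrArg IsUnit (map_disc (Int.castRingHom (ZMod P)) s).symm)

theorem card_filter_disc_eq_zero_le (I J : Finset ℤ) : #{s ∈ I ×ˢ J | disc s = 0} ≤ #J := by
  refine card_le_card_of_injOn Prod.snd ?_ ?_
  · rintro ⟨a, b⟩ hs
    exact (mem_product.mp (mem_filter.mp hs).1).2
  · rintro ⟨a, b⟩ ha ⟨a', b'⟩ ha' (rfl : b = b')
    have hdisc : disc (a, b) = disc (a', b) :=
      (mem_filter.mp ha).2.trans (mem_filter.mp ha').2.symm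
    have hcube : a ^ 3 = a' ^ 3 := by
      rw [disc, disc] at hdisc
      linarith
    rw [Odd.pow_injective (by decide : Odd 3) hcube]

open scoped Classical in
/-- The pairs `(a, b)` with `|a| ≤ U` and `|b| ≤ V` for which `y² = x³ + ax + b` is an elliptic
curve over `ℚ` whose discriminant is coprime to `P`, for odd `P`. -/
noncomputable def coprimeDiscPairs (P : ℕ) (U V : ℝ) : Finset (ℤ × ℤ) :=
  {s ∈ intBall U ×ˢ intBall V | disc s ≠ 0 ∧ IsCoprime (P : ℤ) (disc s)}

theorem mem_coprimeDiscPairs {s : ℤ × ℤ} : s ∈ coprimeDiscPairs P U V ↔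
    (|(s.1 : ℝ)| ≤ U ∧ |(s.2 : ℝ)| ≤ V) ∧ disc s ≠ 0 ∧ IsCoprime (P : ℤ) (disc s) := by
  rw [coprimeDiscPairs, mem_filter, mem_product, mem_intBall, mem_intBall]

open scoped Classical in
theorem abs_card_filter_isCoprime_disc_sub_le (hP : Squarefree P) (h6 : P.Coprime 6)
    (hU : 0 ≤ U) (hV : 0 ≤ V) :
    |(#{s ∈ intBall U ×ˢ intBall V | IsCoprime (P : ℤ) (disc s)} : ℝ) -
      P.totient / P * (4 * U * V)| ≤ P.totient * (4 * U + 4 * V + 4 * P) := by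
  have hP0 : (P : ℝ) ≠ 0 := mod_cast hP.ne_zero
  have hbox := abs_card_box_filter_intCast_mem_sub_le (Nat.pos_of_ne_zero hP.ne_zero)
    (unitDiscPairs (ZMod P)) hU hV
  simp only [intCast_mem_unitDiscPairs, ncard_unitDiscPairs_zmod hP h6] at hbox
  convert hbox using 1
  · congr 2
    push_cast
    field_simp
    ring
  · push_cast
    field_simp
    ring

theorem abs_card_coprimeDiscPairs_sub_le (hP : Squarefree P) (h6 : P.Coprime 6)
    (hU : 0 ≤ U) (hV : 0 ≤ V) :
    |(#(coprimeDiscPairs P U V) : ℝ) - P.totient / P * (4 * U * V)| ≤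
      P.totient * (4 * U + 6 * V + 5 * P) := by
  classical
  set N := {s ∈ intBall U ×ˢ intBall V | IsCoprime (P : ℤ) (disc s)} with hN
  set Z := {s ∈ N | disc s = 0}
  have hZ : (#Z : ℝ) ≤ P.totient * (2 * V + P) := by
    have hφ : (1 : ℝ) ≤ P.totient := mod_cast Nat.totient_pos.mpr hP.ne_zero.bot_lt
    have hP1 : (1 : ℝ) ≤ P := mod_cast hP.ne_zero.bot_lt
    have hsub : #Z ≤ #(intBall V) :=
      (card_le_card (filter_subset_filter _ (filter_subset _ _))).trans
        (card_filter_disc_eq_zero_le (intBall U) (intBall V))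
    calc (#Z : ℝ) ≤ #(intBall V) := mod_cast hsub
      _ ≤ 2 * V + 1 := card_intBall_le hV
      _ ≤ 1 * (2 * V + P) := by linarith
      _ ≤ P.totient * (2 * V + P) := by gcongr
  have hsplit : (#Z : ℝ) + #(coprimeDiscPairs P U V) = #N := by
    have hgood : coprimeDiscPairs P U V = {s ∈ N | ¬ disc s = 0} := by
      rw [coprimeDiscPairs, hN, filter_filter]
      simp only [and_comm, ne_eq]
    rw [hgood]
    exact mod_cast card_filter_add_card_filter_not (s := N) fun s ↦ disc s = 0
  have hN_bound := abs_card_filter_isCoprime_disc_sub_le hP h6 hU hV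
  rw [abs_le] at hN_bound ⊢
  constructor <;> linarith [(#Z).cast_nonneg (α := ℝ)]

theorem natCast_pow_mul_abs_le_iff {d m : ℕ} (hd : d ≠ 0) {T : ℝ} {a : ℤ} :
    |(((d : ℤ) ^ m * a : ℤ) : ℝ)| ≤ T ↔ |(a : ℝ)| ≤ T / (d : ℝ) ^ m := by
  rw [le_div_iff₀' (by positivity)]
  push_cast
  rw [abs_mul, abs_of_nonneg (by positivity : (0 : ℝ) ≤ (d : ℝ) ^ m)]

theorem weighted_scale_mem_coprimeDiscPairs {d : ℕ} (hd0 : d ≠ 0) (hd : d.Coprime P)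
    {s : ℤ × ℤ} : ((d : ℤ) ^ 4 * s.1, (d : ℤ) ^ 6 * s.2) ∈ coprimeDiscPairs P U V ↔
      s ∈ coprimeDiscPairs P (U / (d : ℝ) ^ 4) (V / (d : ℝ) ^ 6) := by
  have hcop : IsCoprime (P : ℤ) ((d : ℤ) ^ 12) :=
    (Nat.isCoprime_iff_coprime.mpr hd.symm).pow_right
  have hd12 : (d : ℤ) ^ 12 ≠ 0 := by positivity
  rw [mem_coprimeDiscPairs, mem_coprimeDiscPairs, disc_weighted_scale,
    natCast_pow_mul_abs_le_iff hd0, natCast_pow_mul_abs_le_iff hd0, IsCoprime.mul_right_iff,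
    and_iff_right hcop, mul_ne_zero_iff, and_iff_right hd12]

theorem card_coprimeDiscPairs_filter_dvd_of_coprime {d : ℕ} (hd0 : d ≠ 0) (hd : d.Coprime P) :
    #{s ∈ coprimeDiscPairs P U V | (d : ℤ) ^ 4 ∣ s.1 ∧ (d : ℤ) ^ 6 ∣ s.2} =
      #(coprimeDiscPairs P (U / (d : ℝ) ^ 4) (V / (d : ℝ) ^ 6)) := by
  have hpow (m : ℕ) : (d : ℤ) ^ m ≠ 0 := by positivity
  refine (card_bij (fun s _ ↦ ((d : ℤ) ^ 4 * s.1, (d : ℤ) ^ 6 * s.2)) ?_ ?_ ?_).symm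
  · intro s hs
    exact mem_filter.mpr ⟨(weighted_scale_mem_coprimeDiscPairs hd0 hd).mpr hs,
      dvd_mul_right _ _, dvd_mul_right _ _⟩
  · intro s _ t _ hst
    obtain ⟨h₁, h₂⟩ := Prod.mk.inj hst
    exact Prod.ext (mul_left_cancel₀ (hpow 4) h₁) (mul_left_cancel₀ (hpow 6) h₂)
  · rintro ⟨a, b⟩ hs
    obtain ⟨hmem, ⟨a', rfl⟩, ⟨b', rfl⟩⟩ := mem_filter.mp hs
    exact ⟨(a', b'), (weighted_scale_mem_coprimeDiscPairs hd0 hd).mp hmem, rfl⟩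

theorem coprime_of_dvd_of_isCoprime_disc {d : ℕ} {s : ℤ × ℤ} (h₁ : (d : ℤ) ∣ s.1)
    (h₂ : (d : ℤ) ∣ s.2) (hs : IsCoprime (P : ℤ) (disc s)) : d.Coprime P :=
  (Nat.isCoprime_iff_coprime.mp (hs.of_isCoprime_of_dvd_right (dvd_disc h₁ h₂))).symm

theorem moebius_mul_card_coprimeDiscPairs_filter_dvd {d : ℕ} (hd0 : d ≠ 0) :
    μ d * (#{s ∈ coprimeDiscPairs P U V | (d : ℤ) ^ 4 ∣ s.1 ∧ (d : ℤ) ^ 6 ∣ s.2} : ℤ) =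
      coprimeMoebius P d * #(coprimeDiscPairs P (U / (d : ℝ) ^ 4) (V / (d : ℝ) ^ 6)) := by
  rw [coprimeMoebius]
  split_ifs with hd
  · rw [card_coprimeDiscPairs_filter_dvd_of_coprime hd0 hd]
  · have hempty :
        {s ∈ coprimeDiscPairs P U V | (d : ℤ) ^ 4 ∣ s.1 ∧ (d : ℤ) ^ 6 ∣ s.2} = ∅ := by
      refine filter_eq_empty_iff.mpr fun s hs hdvd ↦ hd ?_
      exact coprime_of_dvd_of_isCoprime_disc ((dvd_pow_self _ four_ne_zero).trans hdvd.1)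
        ((dvd_pow_self _ (by norm_num)).trans hdvd.2) (mem_coprimeDiscPairs.mp hs).2.2
    rw [hempty, card_empty, Nat.cast_zero, mul_zero, zero_mul]

open scoped Classical in
theorem card_coprimeDiscPairs_filter_condM (hW : 0 ≤ W) :
    (#{s ∈ coprimeDiscPairs P (W ^ 4) (W ^ 6) | CondM s.1 s.2} : ℤ) =
      ∑ d ∈ Icc 1 ⌊W⌋₊, coprimeMoebius P d *
        (#(coprimeDiscPairs P (W ^ 4 / (d : ℝ) ^ 4) (W ^ 6 / (d : ℝ) ^ 6)) : ℤ) := by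
  have hcondM : ∀ s ∈ coprimeDiscPairs P (W ^ 4) (W ^ 6),
      (if CondM s.1 s.2 then 1 else 0 : ℤ) =
        ∑ d ∈ (Icc 1 ⌊W⌋₊).filter fun d : ℕ ↦ (d : ℤ) ^ 4 ∣ s.1 ∧ (d : ℤ) ^ 6 ∣ s.2, μ d := by
    rintro ⟨a, b⟩ hs
    obtain ⟨⟨haW, hbW⟩, hdisc, -⟩ := mem_coprimeDiscPairs.mp hs
    refine (sum_moebius_filter_pow_dvd fun d hda hdb ↦ Nat.le_floor ?_).symm
    rcases eq_or_ne a 0 with rfl | ha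
    · have hb : b ≠ 0 := by
        rintro rfl
        simp [disc] at hdisc
      exact natCast_le_of_pow_dvd hb (by norm_num) hW hdb hbW
    · exact natCast_le_of_pow_dvd ha four_ne_zero hW hda haW
  rw [card_filter, Nat.cast_sum]
  push_cast
  rw [sum_congr rfl hcondM]
  simp only [sum_filter]
  rw [sum_comm]
  refine sum_congr rfl fun d hd ↦ ?_
  have hd0 : d ≠ 0 := Nat.one_le_iff_ne_zero.mp (mem_Icc.mp hd).1
  rw [← moebius_mul_card_coprimeDiscPairs_filter_dvd hd0, ← sum_filter, sum_const, nsmul_eq_mul,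
    mul_comm]

theorem abs_coprimeMoebius_mul_card_sub_le (hP : Squarefree P) (h6 : P.Coprime 6) (hW : 1 ≤ W)
    {d : ℕ} (hd0 : d ≠ 0) :
    |coprimeMoebius P d *
        (#(coprimeDiscPairs P (W ^ 4 / (d : ℝ) ^ 4) (W ^ 6 / (d : ℝ) ^ 6)) : ℝ) -
      P.totient / P * 4 * W ^ 10 * (coprimeMoebius P d / (d : ℝ) ^ 10)| ≤
      P.totient * (10 * W ^ 6 * (1 / (d : ℝ) ^ 2) + 5 * P) := by
  have hd1 : (1 : ℝ) ≤ d := mod_cast Nat.one_le_iff_ne_zero.mpr hd0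
  set u := W ^ 4 / (d : ℝ) ^ 4 with hu
  set v := W ^ 6 / (d : ℝ) ^ 6 with hv
  have hu_le : u ≤ W ^ 6 * (1 / (d : ℝ) ^ 2) := by
    rw [hu, ← div_eq_mul_one_div]
    gcongr <;> norm_num [hW, hd1]
  have hv_le : v ≤ W ^ 6 * (1 / (d : ℝ) ^ 2) := by
    rw [hv, ← div_eq_mul_one_div]
    gcongr
    norm_num
  have hcount := abs_card_coprimeDiscPairs_sub_le hP h6 (U := u) (V := v) (by positivity)
    (by positivity)
  have hmain : P.totient / P * 4 * W ^ 10 * (coprimeMoebius P d / (d : ℝ) ^ 10) =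
      coprimeMoebius P d * (P.totient / P * (4 * u * v)) := by
    rw [hu, hv]
    field_simp
  calc _ = |(coprimeMoebius P d : ℝ)| *
        |(#(coprimeDiscPairs P u v) : ℝ) - P.totient / P * (4 * u * v)| := by
        rw [hmain, ← mul_sub, abs_mul]
    _ ≤ 1 * (P.totient * (4 * u + 6 * v + 5 * P)) := by
        gcongr
        exact abs_coprimeMoebius_le_one P d
    _ ≤ P.totient * (10 * W ^ 6 * (1 / (d : ℝ) ^ 2) + 5 * P) := by
        rw [one_mul]
        gcongr
        linarith

open scoped Classical in
theorem abs_card_coprimeDiscPairs_filter_condM_sub_sum_le (hP : Squarefree P) (h6 : P.Coprime 6)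
    (hW : 1 ≤ W) :
    |(#{s ∈ coprimeDiscPairs P (W ^ 4) (W ^ 6) | CondM s.1 s.2} : ℝ) -
      P.totient / P * 4 * W ^ 10 * ∑ d ∈ Icc 1 ⌊W⌋₊, coprimeMoebius P d / (d : ℝ) ^ 10| ≤
      P.totient * (10 * (∑' d : ℕ, 1 / (d : ℝ) ^ 2) * W ^ 6 + 5 * P * W) := by
  have hW0 : 0 ≤ W := zero_le_one.trans hW
  have hcard : (#{s ∈ coprimeDiscPairs P (W ^ 4) (W ^ 6) | CondM s.1 s.2} : ℝ) =
      ∑ d ∈ Icc 1 ⌊W⌋₊, (coprimeMoebius P d : ℝ) *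
        #(coprimeDiscPairs P (W ^ 4 / (d : ℝ) ^ 4) (W ^ 6 / (d : ℝ) ^ 6)) :=
    mod_cast card_coprimeDiscPairs_filter_condM (P := P) hW0
  have hsum_sq : ∑ d ∈ Icc 1 ⌊W⌋₊, 1 / (d : ℝ) ^ 2 ≤ ∑' d : ℕ, 1 / (d : ℝ) ^ 2 :=
    (Real.summable_one_div_nat_pow.mpr one_lt_two).sum_le_tsum _ fun d _ ↦ by positivity
  rw [hcard, mul_sum, ← sum_sub_distrib]
  calc _ ≤ ∑ d ∈ Icc 1 ⌊W⌋₊, P.totient * (10 * W ^ 6 * (1 / (d : ℝ) ^ 2) + 5 * P) :=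
        (abs_sum_le_sum_abs _ _).trans <| sum_le_sum fun d hd ↦
          abs_coprimeMoebius_mul_card_sub_le hP h6 hW
            (Nat.one_le_iff_ne_zero.mp (mem_Icc.mp hd).1)
    _ = P.totient * (10 * (∑ d ∈ Icc 1 ⌊W⌋₊, 1 / (d : ℝ) ^ 2) * W ^ 6 + 5 * P * ⌊W⌋₊) := by
        rw [← mul_sum, sum_add_distrib, ← mul_sum, sum_const, nsmul_eq_mul, Nat.card_Icc,
          Nat.add_sub_cancel]
        ring
    _ ≤ P.totient * (10 * (∑' d : ℕ, 1 / (d : ℝ) ^ 2) * W ^ 6 + 5 * P * W) := by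
        gcongr
        exact Nat.floor_le hW0

open scoped Classical in
theorem abs_card_coprimeDiscPairs_filter_condM_sub_le (hP : Squarefree P) (h6 : P.Coprime 6)
    (hW : 1 ≤ W) :
    |(#{s ∈ coprimeDiscPairs P (W ^ 4) (W ^ 6) | CondM s.1 s.2} : ℝ) -
      P.totient / P * 4 * W ^ 10 * ∑' d : ℕ, coprimeMoebius P d / (d : ℝ) ^ 10| ≤
      P.totient * (14 * (∑' d : ℕ, 1 / (d : ℝ) ^ 2) * W ^ 6 + 5 * P * W) := by
  set Z := ∑' d : ℕ, 1 / (d : ℝ) ^ 2 with hZ_def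
  set c := P.totient / P * 4 * W ^ 10 with hc_def
  have hc : 0 ≤ c := by positivity
  have hP1 : (1 : ℝ) ≤ P := mod_cast hP.ne_zero.bot_lt
  have htail : |c * ∑ d ∈ Icc 1 ⌊W⌋₊, coprimeMoebius P d / (d : ℝ) ^ 10 -
      c * ∑' d : ℕ, coprimeMoebius P d / (d : ℝ) ^ 10| ≤ P.totient * (4 * Z * W ^ 6) := by
    rw [abs_sub_comm, ← mul_sub, abs_mul, abs_of_nonneg hc]
    calc _ ≤ c * (Z / W ^ 8) := by
          gcongr
          exact abs_tsum_sub_sum_Icc_le (abs_coprimeMoebius_div_pow_le P 10) (by positivity)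
            (Nat.lt_floor_add_one W).le
      _ = P.totient / P * (4 * Z * W ^ 2) := by
          rw [hc_def]
          field_simp
      _ ≤ P.totient * (4 * Z * W ^ 6) := by
          gcongr
          · exact div_le_self (Nat.cast_nonneg _) hP1
          · norm_num
  have htrunc := abs_card_coprimeDiscPairs_filter_condM_sub_sum_le hP h6 hW
  rw [← hZ_def, ← hc_def] at htrunc
  linarith [(abs_sub_le _ _ _).trans (add_le_add htrunc htail)]

theorem setOf_mem_Efam_isCoprime_disc :
    {s ∈ Efam (W ^ 12) | IsCoprime (P : ℤ) (disc s)} =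
      {s | s ∈ coprimeDiscPairs P (W ^ 4) (W ^ 6) ∧ CondM s.1 s.2} := by
  ext ⟨a, b⟩
  have ha : |(a : ℝ)| ^ 3 ≤ W ^ 12 ↔ |(a : ℝ)| ≤ W ^ 4 := by
    rw [show W ^ 12 = (W ^ 4) ^ 3 by ring]
    exact pow_le_pow_iff_left₀ (abs_nonneg _) (by positivity) three_ne_zero
  have hb : (b : ℝ) ^ 2 ≤ W ^ 12 ↔ |(b : ℝ)| ≤ W ^ 6 := by
    rw [← sq_abs, show W ^ 12 = (W ^ 6) ^ 2 by ring]
    exact pow_le_pow_iff_left₀ (abs_nonneg _) (by positivity) two_ne_zero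
  simp only [Efam, mem_coprimeDiscPairs, Set.mem_ofPred_eq, Int.cast_max, Int.cast_pow,
    Int.cast_abs, max_le_iff, ha, hb]
  change (disc (a, b) ≠ 0 ∧ _) ∧ _ ↔ _
  tauto

theorem abs_ncard_Efam_isCoprime_disc_sub_le (hP : Squarefree P) (h6 : P.Coprime 6)
    (hW : 1 ≤ W) :
    |({s ∈ Efam (W ^ 12) | IsCoprime (P : ℤ) (disc s)}.ncard : ℝ) -
      P.totient / P * 4 * W ^ 10 * ∑' d : ℕ, coprimeMoebius P d / (d : ℝ) ^ 10| ≤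
      P.totient * (14 * (∑' d : ℕ, 1 / (d : ℝ) ^ 2) * W ^ 6 + 5 * P * W) := by
  classical
  rw [setOf_mem_Efam_isCoprime_disc, ← coe_filter, Set.ncard_coe_finset]
  exact abs_card_coprimeDiscPairs_filter_condM_sub_le hP h6 hW

end UnitDiscCount

section EulerProduct

theorem totient_div_mul_tsum_coprimeMoebius {P k : ℕ} (hP : P ≠ 0) (hk : 1 < k) :
    P.totient / P * ∑' d : ℕ, coprimeMoebius P d / (d : ℝ) ^ k =
      (∏ p ∈ P.primeFactors, ((p : ℝ) - 1) / p * ((p : ℝ) ^ k / ((p : ℝ) ^ k - 1))) *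
        (riemannZeta k).re⁻¹ := by
  have htotient : (P.totient : ℝ) / P = ∏ p ∈ P.primeFactors, (1 - (p : ℝ)⁻¹) := by
    rw [div_eq_iff (mod_cast hP), mul_comm]
    have h := congrArg (Rat.cast : ℚ → ℝ) (Nat.totient_eq_mul_prod_factors P)
    push_cast at h
    exact h
  rw [htotient, tsum_coprimeMoebius_div_pow hP hk, mul_inv, ← mul_assoc, ← prod_inv_distrib,
    ← prod_mul_distrib]
  congr 1
  refine prod_congr rfl fun p hp ↦ ?_
  have hp1 : (1 : ℝ) < p := mod_cast (Nat.prime_of_mem_primeFactors hp).one_lt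
  have hpk : (p : ℝ) ^ k ≠ 0 := by positivity
  rw [← one_div (p : ℝ), one_sub_div (by positivity), ← one_div ((p : ℝ) ^ k), one_sub_div hpk,
    inv_div]

variable {s : Finset ℕ}

theorem totient_prod_primes (hs : ∀ p ∈ s, p.Prime) :
    ((∏ p ∈ s, p).totient : ℝ) = ∏ p ∈ s, ((p : ℝ) - 1) := by
  have hpos : 0 < ∏ p ∈ s, p := prod_pos fun p hp ↦ (hs p hp).pos
  have h := Nat.totient_mul_prod_primeFactors (∏ p ∈ s, p)
  rw [Nat.primeFactors_prod hs, mul_comm] at h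
  rw [Nat.eq_of_mul_eq_mul_left hpos h, Nat.cast_prod]
  exact prod_congr rfl fun p hp ↦ by rw [Nat.cast_sub (hs p hp).one_le, Nat.cast_one]

theorem squarefree_prod_primes (hs : ∀ p ∈ s, p.Prime) : Squarefree (∏ p ∈ s, p) :=
  squarefree_prod_of_pairwise_isCoprime
    (fun p hp q hq hpq ↦ Nat.coprime_iff_isRelPrime.mp
      ((Nat.coprime_primes (hs p hp) (hs q hq)).mpr hpq))
    fun p hp ↦ (hs p hp).prime.squarefree

theorem isCoprime_prod_primes_iff (hs : ∀ p ∈ s, p.Prime) {n : ℤ} :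
    IsCoprime (((∏ p ∈ s, p : ℕ)) : ℤ) n ↔ ∀ p ∈ s, ¬ (p : ℤ) ∣ n := by
  rw [Nat.cast_prod, IsCoprime.prod_left_iff]
  exact forall₂_congr fun p hp ↦ (Nat.prime_iff_prime_int.mp (hs p hp)).coprime_iff_not_dvd

theorem coprime_prod_primes_six (hs : ∀ p ∈ s, p.Prime) (hs5 : ∀ p ∈ s, 5 ≤ p) :
    (∏ p ∈ s, p).Coprime 6 := by
  refine Nat.Coprime.prod_left fun p hp ↦ (hs p hp).coprime_iff_not_dvd.mpr fun h ↦ ?_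
  have hp6 := Nat.le_of_dvd (by norm_num) h
  have hp5 := hs5 p hp
  interval_cases p
  · omega
  · exact absurd (hs 6 hp) (by norm_num)

end EulerProduct

theorem abs_ncard_Efam_forall_not_dvd_sub_le {s : Finset ℕ} (hs : ∀ p ∈ s, p.Prime)
    (hs5 : ∀ p ∈ s, 5 ≤ p) {W : ℝ} (hW : 1 ≤ W) (hsW : ∏ p ∈ s, (p : ℝ) ≤ W ^ 5) :
    |({AB ∈ Efam (W ^ 12) | ∀ p ∈ s, ¬ (p : ℤ) ∣ disc AB}.ncard : ℝ) -
      (∏ p ∈ s, ((p : ℝ) - 1) / p * ((p : ℝ) ^ 10 / ((p : ℝ) ^ 10 - 1))) *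
        (4 / (riemannZeta 10).re) * W ^ 10| ≤
      (14 * (∑' d : ℕ, 1 / (d : ℝ) ^ 2) + 5) * (∏ p ∈ s, ((p : ℝ) - 1)) * W ^ 6 := by
  have hcount := abs_ncard_Efam_isCoprime_disc_sub_le (squarefree_prod_primes hs)
    (coprime_prod_primes_six hs hs5) hW
  have heuler := totient_div_mul_tsum_coprimeMoebius (squarefree_prod_primes hs).ne_zero
    (by norm_num : 1 < 10)
  rw [Nat.primeFactors_prod hs, Nat.cast_ofNat] at heuler
  simp only [isCoprime_prod_primes_iff hs] at hcount
  have hmain : (∏ p ∈ s, p).totient / ((∏ p ∈ s, p : ℕ) : ℝ) * 4 * W ^ 10 *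
      ∑' d : ℕ, coprimeMoebius (∏ p ∈ s, p) d / (d : ℝ) ^ 10 =
      (∏ p ∈ s, ((p : ℝ) - 1) / p * ((p : ℝ) ^ 10 / ((p : ℝ) ^ 10 - 1))) *
        (4 / (riemannZeta 10).re) * W ^ 10 := by
    linear_combination 4 * W ^ 10 * heuler
  rw [hmain] at hcount
  calc _ ≤ _ := hcount
    _ ≤ (∏ p ∈ s, p).totient * (14 * (∑' d : ℕ, 1 / (d : ℝ) ^ 2) * W ^ 6 + 5 * W ^ 5 * W) := by
        rw [Nat.cast_prod]
        gcongr
    _ = (14 * (∑' d : ℕ, 1 / (d : ℝ) ^ 2) + 5) * (∏ p ∈ s, ((p : ℝ) - 1)) * W ^ 6 := by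
        rw [totient_prod_primes hs]
        ring

theorem stmt_17_general :
    ∃ C : ℝ, 0 < C ∧ ∀ (k : ℕ) (p : Fin k → ℕ), (∀ i, (p i).Prime) → (∀ i, 5 ≤ p i) →
      Function.Injective p → ∀ X : ℝ, 1 ≤ X → ∏ i, (p i : ℝ) ≤ X ^ ((5 : ℝ) / 12) →
      |({AB ∈ Efam X | ∀ i, ¬ (p i : ℤ) ∣ (4 * AB.1 ^ 3 + 27 * AB.2 ^ 2)}.ncard : ℝ)
          - (∏ i, ((p i : ℝ) - 1) / (p i : ℝ) * ((p i : ℝ) ^ 10 / ((p i : ℝ) ^ 10 - 1)))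
            * (4 / (riemannZeta 10).re) * X ^ ((5 : ℝ) / 6)|
        ≤ C * (∏ i, ((p i : ℝ) - 1)) * X ^ ((1 : ℝ) / 2) := by
  refine ⟨14 * (∑' d : ℕ, 1 / (d : ℝ) ^ 2) + 5, by positivity,
    fun k p hp hp5 hinj X hX hpX ↦ ?_⟩
  obtain ⟨W, hW, rfl⟩ : ∃ W : ℝ, 1 ≤ W ∧ X = W ^ 12 :=
    ⟨X ^ ((12 : ℕ) : ℝ)⁻¹, Real.one_le_rpow hX (by positivity),
      (Real.rpow_inv_natCast_pow (by positivity) (by norm_num)).symm⟩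
  have hrpow {n : ℕ} {r : ℝ} (hr : r = n / 12) : (W ^ 12) ^ r = W ^ n := by
    rw [hr, ← Real.rpow_natCast_mul (by positivity), ← Real.rpow_natCast]
    congr 1
    push_cast
    ring
  rw [hrpow (n := 5) (by norm_num)] at hpX
  rw [hrpow (n := 10) (by norm_num), hrpow (n := 6) (by norm_num)]
  simpa only [disc, prod_map, mem_map, mem_univ, true_and, forall_exists_index,
    forall_apply_eq_imp_iff, Function.Embedding.coeFn_mk] using
    abs_ncard_Efam_forall_not_dvd_sub_le (s := univ.map ⟨p, hinj⟩) (by simpa using hp)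
      (by simpa using hp5) hW (by simpa using hpX)

theorem stmt_17 (k : ℕ) (hk : 1 ≤ k) (ε : ℝ) (hε : 0 < ε) (hε3 : ε < 1 / 3) :
    ∃ C : ℝ, 0 < C ∧ ∀ (p : Fin k → ℕ), (∀ i, (p i).Prime) → (∀ i, 5 ≤ p i) →
      Function.Injective p → ∀ (X : ℝ), 2 ≤ X → (∏ i, (p i : ℝ)) ≤ X ^ ((1 : ℝ) / 3 - ε) →
      |({AB ∈ Efam X | ∀ i, ¬ (p i : ℤ) ∣ (4 * AB.1 ^ 3 + 27 * AB.2 ^ 2)}.ncard : ℝ)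
          - (∏ i, ((p i : ℝ) - 1) / (p i : ℝ) * ((p i : ℝ) ^ 10 / ((p i : ℝ) ^ 10 - 1)))
            * (4 / (riemannZeta 10).re) * X ^ ((5 : ℝ) / 6)|
        ≤ C * (∏ i, ((p i : ℝ) - 1)) * X ^ ((1 : ℝ) / 2) := by
  obtain ⟨C, hC, hbound⟩ := stmt_17_general
  exact ⟨C, hC, fun p hp hp5 hinj X hX hpX ↦ hbound k p hp hp5 hinj X (by linarith)
    (hpX.trans (Real.rpow_le_rpow_of_exponent_le (by linarith) (by linarith)))⟩
end

section
/- Fix an integer k ≥ 1, a real ε with 0 < ε < 1/3, exponents e_1,…,e_k ∈ {1,2}, and positive integers r_1,…,r_k such that for each i either e_i = 1 and (r_i is odd or r_i = 2), or e_i = 2 and r_i = 1. Set c := 0 if e_j = 1 and r_j is odd for some j, and otherwise c := (−1)^{#{j : e_j = 2}}; set r := the smallest odd r_i if some r_i is odd, and r := 0 otherwise. Then there is a constant C = C(k, ε, (e_i), (r_i)) such that for all real X ≥ 2 and all distinct primes p_1, …, p_k ≥ 5 with p_1⋯p_k ≤ X^{1/3−ε}: if some r_j is odd, then | Σ_{(A,B)∈E(X)}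 ∏_{i=1}^{k} â_{A,B}(p_i^{e_i})^{r_i} | ≤ C·2^{r}·(p_1⋯p_k)·X^{1/2}; and otherwise | Σ_{(A,B)∈E(X)} ∏_{i=1}^{k} â_{A,B}(p_i^{e_i})^{r_i} − c·|E(X)| | ≤ C·( (p_1⋯p_k)·X^{1/2} + (Σ_{i=1}^{k} 1/p_i)·X^{5/6} ). -/
/-- `N_p(A,B)`: the number of `F_p`-rational points of the projective plane cubic
`y²z = x³ + Axz² + Bz³`. -/
noncomputable def Np (p : ℕ) (hp : p.Prime) (A B : ℤ) : ℕ :=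
  letI : Fact p.Prime := ⟨hp⟩
  {P : Projectivization (ZMod p) (Fin 3 → ZMod p) |
    (P.rep 1) ^ 2 * P.rep 2 =
      (P.rep 0) ^ 3 + (A : ZMod p) * P.rep 0 * (P.rep 2) ^ 2 +
        (B : ZMod p) * (P.rep 2) ^ 3}.ncard

/-- `a_p(A,B) = p + 1 − N_p(A,B)`. -/
noncomputable def apFrob (p : ℕ) (hp : p.Prime) (A B : ℤ) : ℤ :=
  (p : ℤ) + 1 - (Np p hp A B : ℤ)

/-- `â(p) = a_p/√p`. -/
noncomputable def ahat (p : ℕ) (hp : p.Prime) (A B : ℤ) : ℝ :=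
  (apFrob p hp A B : ℝ) / Real.sqrt p

/-- The normalized coefficient `â(p^e)` for `e ∈ {1, 2}`:
`â(p) = a_p/√p`; `â(p²) = â(p)² − 2` for good reduction and `â(p)²` otherwise. -/
noncomputable def ahatPow (p : ℕ) (hp : p.Prime) (A B : ℤ) (e : ℕ) : ℝ :=
  if e = 2 then
    (if (p : ℤ) ∣ (4 * A ^ 3 + 27 * B ^ 2) then (ahat p hp A B) ^ 2
     else (ahat p hp A B) ^ 2 - 2)
  else ahat p hp A B

/-! The trace of Frobenius at `p` is minus a sum of quadratic characters of values of a cubic, and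
Stepanov's method bounds it by `O(√p)`. Over the pairs of coefficients modulo `p`, twisting by a
nonsquare kills the odd moments of the trace, and orthogonality gives the second moment. By the
Chinese remainder theorem a product over several primes has period `P = p₁ ⋯ pₖ`, and its mean is
the product of the means. A bounded function of period `P` and mean zero sums to `O(P √X)` over
the pairs of height at most `X`.

Condition (M) requires no sieve. Every nonzero pair is uniquely `(d⁴ a, d⁶ b)` with `(a, b)`
satisfying (M). The products are unchanged by this scaling when `d` is prime to `P` and vanish
on the scaled pairs otherwise, so the bound passes to `E(X)` by induction on the height.

For the even moments each factor has the same mean as a function that vanishes at the origin and is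
constant elsewhere. That constant is `±1 + O(1/p)`, and only `O(X^(5/6) / p + √X)` pairs reduce to
the origin modulo `p`. -/

section Stepanov

open Polynomial

section PowDeriv

variable {R : Type*} [CommRing R]

/-- The operator `r ↦ c f' r + f r'` expressing `(f ^ c * r)'` as a multiple of `f ^ (c - 1)`. -/
noncomputable def powDerivStep (f : R[X]) (c : ℕ) : R[X] →ₗ[R] R[X] :=
  LinearMap.mulLeft R (c * derivative f) + LinearMap.mulLeft R f ∘ₗ derivative

/-- The polynomial `powDeriv f c k r` such that the `k`-th derivative of `f ^ c * r` is
`f ^ (c - k) * powDeriv f c k r`, as a linear function of `r`. -/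
noncomputable def powDeriv (f : R[X]) (c : ℕ) : ℕ → R[X] →ₗ[R] R[X]
  | 0 => LinearMap.id
  | k + 1 => powDerivStep f (c - k) ∘ₗ powDeriv f c k

lemma derivative_pow_mul_mul (f r : R[X]) {w : R[X]} (hw : derivative w = 0) (c : ℕ) :
    derivative (f ^ (c + 1) * r * w) = f ^ c * powDerivStep f (c + 1) r * w := by
  simp only [powDerivStep, derivative_mul, hw, derivative_pow, LinearMap.comp_apply,
    LinearMap.add_apply, LinearMap.mulLeft_apply, Nat.add_sub_cancel, map_natCast]
  ring

lemma iterate_derivative_pow_mul_mul (f r : R[X]) {w : R[X]} (hw : derivative w = 0) {c k : ℕ}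
    (hk : k ≤ c) : derivative^[k] (f ^ c * r * w) = f ^ (c - k) * powDeriv f c k r * w := by
  induction k with
  | zero => simp [powDeriv]
  | succ k ih =>
    have hck : c - k = c - (k + 1) + 1 := by lia
    rw [Function.iterate_succ_apply', ih (by lia), powDeriv, LinearMap.comp_apply, hck,
      derivative_pow_mul_mul _ _ hw]

lemma natDegree_powDerivStep_le (f r : R[X]) (c : ℕ) :
    (powDerivStep f c r).natDegree ≤ r.natDegree + f.natDegree := by
  have hfr : ((c : R[X]) * derivative f * r).natDegree ≤ r.natDegree + f.natDegree := by
    rw [mul_assoc]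
    have hcast := natDegree_mul_le (p := (c : R[X])) (q := derivative f * r)
    have hmul := natDegree_mul_le (p := derivative f) (q := r)
    have hder := natDegree_derivative_le f
    rw [natDegree_natCast] at hcast
    lia
  have hrf : (f * derivative r).natDegree ≤ r.natDegree + f.natDegree := by
    have hmul := natDegree_mul_le (p := f) (q := derivative r)
    have hder := natDegree_derivative_le r
    lia
  exact natDegree_add_le_of_degree_le hfr hrf

lemma natDegree_powDeriv_le (f r : R[X]) (c k : ℕ) :
    (powDeriv f c k r).natDegree ≤ r.natDegree + k * f.natDegree := by
  induction k with
  | zero => simp [powDeriv]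
  | succ k ih =>
    have hstep := natDegree_powDerivStep_le f (powDeriv f c k r) (c - k)
    rw [powDeriv, LinearMap.comp_apply]
    lia

end PowDeriv

lemma card_mul_le_natDegree_of_le_rootMultiplicity {R : Type*} [CommRing R] [IsDomain R]
    {f : R[X]} {S : Finset R} {m : ℕ} (h : ∀ x ∈ S, m ≤ f.rootMultiplicity x) :
    S.card * m ≤ f.natDegree := by
  classical
  calc S.card * m ≤ ∑ x ∈ S, f.roots.count x := by
        simpa only [smul_eq_mul, count_roots] using S.card_nsmul_le_sum _ m h
    _ ≤ ∑ x ∈ S ∪ f.roots.toFinset, f.roots.count x :=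
        Finset.sum_le_sum_of_subset Finset.subset_union_left
    _ = f.roots.card := Multiset.sum_count_eq_card fun x hx =>
        Finset.mem_union_right _ (Multiset.mem_toFinset.mpr hx)
    _ ≤ f.natDegree := card_roots' f

lemma natDegree_lt_of_mem_degreeLT {R : Type*} [Semiring R] {f : R[X]} {d : ℕ} (hd : 0 < d)
    (hf : f ∈ degreeLT R d) : f.natDegree < d := by
  by_cases h0 : f = 0
  · simpa [h0] using hd
  · exact (natDegree_lt_iff_degree_lt h0).mpr (mem_degreeLT.mp hf)

lemma finrank_degreeLT (K : Type*) [Field K] (d : ℕ) :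
    Module.finrank K (degreeLT K d) = d := by
  rw [(degreeLTEquiv K d).finrank_eq, Module.finrank_fin_fun]

lemma exists_ne_zero_forall_eq_zero_of_mem_degreeLT {K W : Type*} [Field K] [AddCommGroup W]
    [Module K W] [FiniteDimensional K W] {ℓ D : ℕ} (σ : Fin ℓ → W →ₗ[K] K[X])
    (hσ : ∀ k u, σ k u ∈ degreeLT K D) (h : ℓ * D < Module.finrank K W) :
    ∃ u ≠ 0, ∀ k, σ k u = 0 := by
  let Φ : W →ₗ[K] Fin ℓ → degreeLT K D :=
    LinearMap.pi fun k => (σ k).codRestrict (degreeLT K D) (hσ k)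
  have hrank : Module.finrank K (Fin ℓ → degreeLT K D) < Module.finrank K W := by
    simpa [Module.finrank_pi_fintype, finrank_degreeLT] using h
  obtain ⟨u, hu, hu0⟩ :=
    Submodule.exists_mem_ne_zero_of_ne_bot (LinearMap.ker_ne_bot_of_finrank_lt (f := Φ) hrank)
  exact ⟨u, hu0, fun k => congrArg Subtype.val (congrFun (LinearMap.mem_ker.mp hu) k)⟩

lemma exists_stepanov_coeffs {K : Type*} [Field K] (f : K[X]) (a : K) (n : ℕ) {J ℓ d : ℕ}
    (hd : 0 < d) (h : ℓ * (d + ℓ * f.natDegree + J) < 2 * (J * d)) :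
    ∃ r s : Fin J → K[X], (∀ j, (r j).natDegree < d) ∧ (∀ j, (s j).natDegree < d) ∧
      ¬ (∀ j, r j = 0 ∧ s j = 0) ∧
      ∀ k < ℓ, ∑ j : Fin J, X ^ (j : ℕ) *
        (powDeriv f ℓ k (r j) + C a * powDeriv f (ℓ + n) k (s j)) = 0 := by
  let V := degreeLT K d
  have hV (v : V) : (v : K[X]).natDegree < d := natDegree_lt_of_mem_degreeLT hd v.2
  let σ (k : Fin ℓ) : (Fin J → V × V) →ₗ[K] K[X] := ∑ j : Fin J,
    LinearMap.mulLeft K (X ^ (j : ℕ)) ∘ₗ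
      (powDeriv f ℓ k ∘ₗ V.subtype ∘ₗ LinearMap.fst K V V +
        LinearMap.mulLeft K (C a) ∘ₗ powDeriv f (ℓ + n) k ∘ₗ V.subtype ∘ₗ LinearMap.snd K V V) ∘ₗ
      LinearMap.proj j
  have hσ (k : Fin ℓ) (u : Fin J → V × V) : σ k u = ∑ j : Fin J, X ^ (j : ℕ) *
      (powDeriv f ℓ k (u j).1 + C a * powDeriv f (ℓ + n) k (u j).2) := by
    simp [σ, LinearMap.sum_apply]
  have hσdeg (k : Fin ℓ) (u : Fin J → V × V) : σ k u ∈ degreeLT K (d + ℓ * f.natDegree + J) := by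
    rw [hσ]
    refine Submodule.sum_mem _ fun j _ => mem_degreeLT.mpr ?_
    have hk : (k : ℕ) * f.natDegree ≤ ℓ * f.natDegree := Nat.mul_le_mul_right _ k.2.le
    have hr := natDegree_powDeriv_le f (u j).1 ℓ k
    have hs := natDegree_powDeriv_le f (u j).2 (ℓ + n) k
    have hsum := natDegree_add_le_of_degree_le (hr.trans (Nat.add_le_add (hV _).le hk))
      ((natDegree_C_mul_le a _).trans (hs.trans (Nat.add_le_add (hV _).le hk)))
    have hmul := natDegree_mul_le_of_le (natDegree_X_pow_le (R := K) (j : ℕ)) hsum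
    have := j.2
    exact degree_le_natDegree.trans_lt (Nat.cast_lt.mpr (by lia))
  obtain ⟨u, hu0, hu⟩ := exists_ne_zero_forall_eq_zero_of_mem_degreeLT σ hσdeg (by
    simpa [Module.finrank_pi_fintype, finrank_degreeLT, two_mul, mul_add, V] using h)
  refine ⟨fun j => (u j).1, fun j => (u j).2, fun j => hV _, fun j => hV _, fun hzero => hu0 ?_,
    fun k hk => by simpa only [hσ] using hu ⟨k, hk⟩⟩
  ext j : 1
  exact Prod.ext (Subtype.ext (hzero j).1) (Subtype.ext (hzero j).2)

section PrimeField

variable {p : ℕ} [Fact p.Prime]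

lemma X_pow_card_dvd_pow_card_sub_C (f : (ZMod p)[X]) : X ^ p ∣ f ^ p - C (f.coeff 0) := by
  have hfrob : (f - C (f.coeff 0)) ^ p = f ^ p - C (f.coeff 0) := by
    rw [sub_pow_char, ← C_pow, ZMod.pow_card]
  rw [← hfrob]
  exact pow_dvd_pow_of_dvd (X_dvd_iff.mpr (by simp)) p

/-
Multiplying by the conjugate `(r - s f^(p/2)) f` turns the divisibility into
`X^p ∣ r² f - f(0) s²`, where the two terms have degrees of different parity.
-/
lemma eq_zero_of_X_pow_card_dvd_add_mul_pow (hp : p ≠ 2) {f r s : (ZMod p)[X]}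
    (hf : Odd f.natDegree) (hf0 : f.coeff 0 ≠ 0) (hr : 2 * r.natDegree + f.natDegree < p)
    (hs : 2 * s.natDegree < p) (hdvd : X ^ p ∣ r + s * f ^ (p / 2)) : r = 0 ∧ s = 0 := by
  have hhalf : p / 2 * 2 + 1 = p := Nat.div_two_mul_two_add_one_of_odd
    ((Fact.out : p.Prime).odd_of_ne_two hp)
  have hdvd' : X ^ p ∣ r ^ 2 * f - C (f.coeff 0) * s ^ 2 := by
    have hfp : f ^ p = (f ^ (p / 2)) ^ 2 * f := by rw [← pow_mul, ← pow_succ, hhalf]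
    have hconj : r ^ 2 * f - C (f.coeff 0) * s ^ 2
        = (r + s * f ^ (p / 2)) * ((r - s * f ^ (p / 2)) * f)
          + s ^ 2 * (f ^ p - C (f.coeff 0)) := by
      rw [hfp]
      ring
    rw [hconj]
    exact dvd_add (hdvd.mul_right _) ((X_pow_card_dvd_pow_card_sub_C f).mul_left _)
  have hdeg : (r ^ 2 * f - C (f.coeff 0) * s ^ 2).natDegree < p := by
    have hleft := natDegree_mul_le (p := r ^ 2) (q := f)
    have hright := natDegree_C_mul_le (f.coeff 0) (s ^ 2)
    rw [natDegree_pow] at hleft hright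
    exact (natDegree_sub_le _ _).trans_lt (max_lt (by lia) (by lia))
  have heq : r ^ 2 * f = C (f.coeff 0) * s ^ 2 := by
    refine sub_eq_zero.mp (by_contra fun hne => ?_)
    have := natDegree_le_of_dvd hdvd' hne
    rw [natDegree_X_pow] at this
    lia
  have hr0 : r = 0 := by
    by_contra hr0
    have hfne : f ≠ 0 := ne_zero_of_natDegree_gt hf.pos
    have hparity := congrArg natDegree heq
    rw [natDegree_mul (pow_ne_zero _ hr0) hfne, natDegree_C_mul hf0, natDegree_pow,
      natDegree_pow] at hparity
    obtain ⟨m, hm⟩ := hf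
    lia
  refine ⟨hr0, ?_⟩
  have hs2 : C (f.coeff 0) * s ^ 2 = 0 := by rw [← heq, hr0]; ring
  simpa [hf0] using hs2

/-- The auxiliary polynomial `∑ j, (r_j + s_j f ^ ((p - 1) / 2)) X ^ (j p)` of Stepanov's method
for the quadratic character of `f`. -/
noncomputable def stepanovPoly (f : (ZMod p)[X]) {J : ℕ} (r s : Fin J → (ZMod p)[X]) :
    (ZMod p)[X] :=
  ∑ j : Fin J, (r j + s j * f ^ (p / 2)) * X ^ ((j : ℕ) * p)

lemma stepanovPoly_succ (f : (ZMod p)[X]) {J : ℕ} (r s : Fin (J + 1) → (ZMod p)[X]) :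
    stepanovPoly f r s = r 0 + s 0 * f ^ (p / 2)
      + X ^ p * stepanovPoly f (fun j => r j.succ) (fun j => s j.succ) := by
  rw [stepanovPoly, stepanovPoly, Fin.sum_univ_succ, Finset.mul_sum]
  congr 1
  · simp
  · refine Finset.sum_congr rfl fun j _ => ?_
    rw [Fin.val_succ]
    ring

lemma eq_zero_of_stepanovPoly_eq_zero (hp : p ≠ 2) {f : (ZMod p)[X]} (hf : Odd f.natDegree)
    (hf0 : f.coeff 0 ≠ 0) {J : ℕ} {r s : Fin J → (ZMod p)[X]}
    (hr : ∀ j, 2 * (r j).natDegree + f.natDegree < p) (hs : ∀ j, 2 * (s j).natDegree < p)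
    (h : stepanovPoly f r s = 0) : ∀ j, r j = 0 ∧ s j = 0 := by
  induction J with
  | zero => exact fun j => j.elim0
  | succ J ih =>
    rw [stepanovPoly_succ] at h
    obtain ⟨hr0, hs0⟩ := eq_zero_of_X_pow_card_dvd_add_mul_pow hp hf hf0 (hr 0) (hs 0)
      ⟨_, (eq_neg_of_add_eq_zero_left h).trans (mul_neg _ _).symm⟩
    rw [hr0, hs0, zero_mul, add_zero, zero_add] at h
    exact Fin.cases ⟨hr0, hs0⟩ (ih (fun j => hr j.succ) (fun j => hs j.succ)
      ((mul_eq_zero.mp h).resolve_left (pow_ne_zero _ X_ne_zero)))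

lemma natDegree_stepanovPoly_le (f : (ZMod p)[X]) {J d : ℕ} {r s : Fin J → (ZMod p)[X]}
    (hr : ∀ j, (r j).natDegree ≤ d) (hs : ∀ j, (s j).natDegree ≤ d) :
    (stepanovPoly f r s).natDegree ≤ d + p / 2 * f.natDegree + (J - 1) * p := by
  refine natDegree_sum_le_of_forall_le _ _ fun j _ => ?_
  have hsf := natDegree_mul_le_of_le (hs j) (natDegree_pow_le (p := f) (n := p / 2))
  have hadd := natDegree_add_le_of_degree_le ((hr j).trans (Nat.le_add_right _ _)) hsf
  refine natDegree_mul_le_of_le hadd ((natDegree_X_pow_le _).trans (Nat.mul_le_mul_right _ ?_))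
  have := j.2
  lia

lemma iterate_derivative_pow_mul_stepanovPoly (f : (ZMod p)[X]) {J ℓ k : ℕ} (hk : k ≤ ℓ)
    (r s : Fin J → (ZMod p)[X]) :
    derivative^[k] (f ^ ℓ * stepanovPoly f r s) = f ^ (ℓ - k) * ∑ j : Fin J, X ^ ((j : ℕ) * p) *
      (powDeriv f ℓ k (r j) + f ^ (p / 2) * powDeriv f (ℓ + p / 2) k (s j)) := by
  have hX (j : ℕ) : derivative (X ^ (j * p) : (ZMod p)[X]) = 0 := by simp [derivative_X_pow]
  have hexp : f ^ ℓ * stepanovPoly f r s = ∑ j : Fin J, (f ^ ℓ * r j * X ^ ((j : ℕ) * p)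
      + f ^ (ℓ + p / 2) * s j * X ^ ((j : ℕ) * p)) := by
    rw [stepanovPoly, Finset.mul_sum]
    exact Finset.sum_congr rfl fun j _ => by ring
  have hsub : ℓ + p / 2 - k = ℓ - k + p / 2 := by lia
  rw [hexp, iterate_derivative_sum, Finset.mul_sum]
  refine Finset.sum_congr rfl fun j _ => ?_
  rw [iterate_map_add, iterate_derivative_pow_mul_mul f (r j) (hX j) hk,
    iterate_derivative_pow_mul_mul f (s j) (hX j) (hk.trans (Nat.le_add_right _ _)), hsub]
  ring

lemma le_rootMultiplicity_pow_mul_stepanovPoly {f : (ZMod p)[X]} {J ℓ : ℕ}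
    {r s : Fin J → (ZMod p)[X]} {a : ZMod p} (hℓ : ℓ ≤ p)
    (hrs : ∀ k < ℓ, ∑ j : Fin J, X ^ (j : ℕ) *
      (powDeriv f ℓ k (r j) + C a * powDeriv f (ℓ + p / 2) k (s j)) = 0)
    (hne : f ^ ℓ * stepanovPoly f r s ≠ 0) {x : ZMod p} (hx : f.eval x ^ (p / 2) = a) :
    ℓ ≤ (f ^ ℓ * stepanovPoly f r s).rootMultiplicity x := by
  obtain rfl | hpos := Nat.eq_zero_or_pos ℓ
  · exact Nat.zero_le _
  refine Nat.le_of_pred_lt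
    (lt_rootMultiplicity_of_isRoot_iterate_derivative_of_mem_nonZeroDivisors' hne
      (fun k hk => ?_) fun k hk hk0 => ?_)
  · have hkℓ : k < ℓ := hk.trans_lt (Nat.pred_lt hpos.ne')
    have hxp (j : ℕ) : x ^ (j * p) = x ^ j := by rw [pow_mul, ZMod.pow_card]
    have hzero := congrArg (eval x) (hrs k hkℓ)
    simp only [eval_finsetSum, eval_mul, eval_add, eval_pow, eval_X, eval_C, eval_zero] at hzero
    rw [iterate_derivative_pow_mul_stepanovPoly f hkℓ.le]
    simp only [IsRoot, eval_finsetSum, eval_mul, eval_add, eval_pow, eval_X, hx, hxp, hzero,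
      mul_zero]
  · refine mem_nonZeroDivisors_of_ne_zero fun h0 => ?_
    have := Nat.le_of_dvd (Nat.pos_of_ne_zero hk0) ((ZMod.natCast_eq_zero_iff k p).mp h0)
    have := Nat.pred_lt hpos.ne'
    lia

lemma stepanov_card_mul_le (hp : p ≠ 2) {f : (ZMod p)[X]} (hf : Odd f.natDegree)
    (hf0 : f.coeff 0 ≠ 0) (a : ZMod p) {w : ℕ} (hw : w ^ 2 + w < p / 2 - f.natDegree / 2)
    {S : Finset (ZMod p)} (hS : ∀ x ∈ S, f.eval x ^ (p / 2) = a) :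
    S.card * (2 * w) ≤ 2 * f.natDegree * w + (w + 3 * f.natDegree) * p := by
  have hhalf : p / 2 * 2 + 1 = p := Nat.div_two_mul_two_add_one_of_odd
    ((Fact.out : p.Prime).odd_of_ne_two hp)
  obtain ⟨h, hm⟩ := id hf
  set m := f.natDegree
  have : m / 2 = h := by lia
  obtain ⟨d, hd⟩ : ∃ d, d = p / 2 - m / 2 := ⟨_, rfl⟩
  obtain ⟨r, s, hr, hs, hne, hrs⟩ := exists_stepanov_coeffs f a (p / 2) (J := w + 2 * m + 1)
    (ℓ := 2 * w) (d := d) (by lia) (by rw [← hd] at hw; nlinarith)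
  have hpoly : stepanovPoly f r s ≠ 0 := fun h0 => hne
    (eq_zero_of_stepanovPoly_eq_zero hp hf hf0 (fun j => by have := hr j; lia)
      (fun j => by have := hs j; lia) h0)
  have hfne : f ≠ 0 := ne_zero_of_natDegree_gt hf.pos
  have hprod := mul_ne_zero (pow_ne_zero (2 * w) hfne) hpoly
  have hww : w ≤ w ^ 2 := Nat.le_self_pow two_ne_zero w
  calc S.card * (2 * w) ≤ (f ^ (2 * w) * stepanovPoly f r s).natDegree :=
        card_mul_le_natDegree_of_le_rootMultiplicity fun x hx =>
          le_rootMultiplicity_pow_mul_stepanovPoly (by lia) hrs hprod (hS x hx)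
    _ ≤ 2 * w * m + (d + p / 2 * m + (w + 2 * m + 1 - 1) * p) :=
        natDegree_mul_le_of_le natDegree_pow_le
          (natDegree_stepanovPoly_le f (fun j => (hr j).le) fun j => (hs j).le)
    _ ≤ 2 * m * w + (w + 3 * m) * p := by
        have hdp : d ≤ p / 2 * m := by
          nlinarith [Nat.sub_le (p / 2) (m / 2), Nat.zero_le (p / 2)]
        have hpm : 2 * (p / 2 * m) ≤ m * p := by nlinarith
        rw [Nat.add_sub_cancel]
        nlinarith

lemma exists_sq_add_self_lt_and_sqrt_lt {n m : ℕ} (hm : 1 ≤ m) (h : 8 * m ≤ √(n : ℝ)) :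
    ∃ w : ℕ, w ^ 2 + w < n / 2 - m / 2 ∧ √(n : ℝ) / 4 < w := by
  obtain ⟨t, ht⟩ : ∃ t, t = √(n : ℝ) := ⟨_, rfl⟩
  obtain ⟨d, hd⟩ : ∃ d, d = n / 2 - m / 2 := ⟨_, rfl⟩
  have htn : t ^ 2 = n := ht ▸ Real.sq_sqrt (Nat.cast_nonneg n)
  have hm1 : (1 : ℝ) ≤ m := by exact_mod_cast hm
  rw [← ht] at h ⊢
  rw [← hd]
  have hdt : t ^ 2 - 1 - m ≤ 2 * d := by
    have hnd : n ≤ 2 * d + m + 1 := by lia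
    have : (n : ℝ) ≤ 2 * d + m + 1 := by exact_mod_cast hnd
    linarith
  have hdw : (d : ℝ) < (Nat.sqrt d + 1) ^ 2 := by exact_mod_cast Nat.lt_succ_sqrt' d
  have hsqrt : t / 4 + 1 < Nat.sqrt d := by
    by_contra hcon
    nlinarith
  obtain ⟨w, hw⟩ : ∃ w, Nat.sqrt d = w + 1 := Nat.exists_eq_succ_of_ne_zero fun h0 => by
    rw [h0, Nat.cast_zero] at hsqrt
    linarith
  refine ⟨w, by nlinarith [hw ▸ Nat.sqrt_le' d], ?_⟩
  rw [hw, Nat.cast_add_one] at hsqrt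
  linarith

lemma card_le_half_add_sqrt (hp : p ≠ 2) {f : (ZMod p)[X]} (hf : Odd f.natDegree)
    (hf0 : f.coeff 0 ≠ 0) (a : ZMod p) {S : Finset (ZMod p)}
    (hS : ∀ x ∈ S, f.eval x ^ (p / 2) = a) :
    (S.card : ℝ) ≤ p / 2 + 7 * f.natDegree * √p := by
  have htp : √(p : ℝ) ^ 2 = p := Real.sq_sqrt (Nat.cast_nonneg p)
  have hm1 : (1 : ℝ) ≤ f.natDegree := by exact_mod_cast hf.pos
  rcases lt_or_ge √(p : ℝ) (8 * f.natDegree) with hsmall | hlarge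
  · have hcard : (S.card : ℝ) ≤ p := by exact_mod_cast S.card_le_univ.trans_eq (ZMod.card p)
    nlinarith [Real.sqrt_nonneg (p : ℝ)]
  obtain ⟨w, hwd, hwt⟩ := exists_sq_add_self_lt_and_sqrt_lt hf.pos hlarge
  have hcount : (S.card : ℝ) * (2 * w) ≤ 2 * f.natDegree * w + (w + 3 * f.natDegree) * p := by
    exact_mod_cast stepanov_card_mul_le hp hf hf0 a hwd hS
  generalize √(p : ℝ) = t at *
  rw [← htp] at hcount ⊢
  have hw : (0 : ℝ) < w := by linarith
  refine le_of_mul_le_mul_right (hcount.trans ?_) (mul_pos two_pos hw)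
  have hmt : 0 ≤ f.natDegree * t * (w - t / 4) :=
    mul_nonneg (mul_nonneg (by linarith) (by linarith)) (by linarith)
  have hmw : 0 ≤ f.natDegree * w * (t - 1) :=
    mul_nonneg (by positivity) (by linarith)
  nlinarith

lemma abs_sum_quadraticChar_le_of_coeff_zero_ne_zero (hp : p ≠ 2) {f : (ZMod p)[X]}
    (hf : Odd f.natDegree) (hf0 : f.coeff 0 ≠ 0) :
    |∑ x, (quadraticChar (ZMod p) (f.eval x) : ℝ)| ≤ 15 * f.natDegree * √p := by
  have hchar : ringChar (ZMod p) ≠ 2 := by rwa [ZMod.ringChar_zmod_n]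
  let S (ε : ℤ) : Finset (ZMod p) := {x | quadraticChar (ZMod p) (f.eval x) = ε}
  have hS (ε : ℤ) : ((S ε).card : ℝ) ≤ p / 2 + 7 * f.natDegree * √p := by
    refine card_le_half_add_sqrt hp hf hf0 ε fun x hx => ?_
    rw [← (Finset.mem_filter.mp hx).2, quadraticChar_eq_pow_of_char_ne_two' hchar, ZMod.card]
  have hroots : ((S 0).card : ℝ) ≤ f.natDegree := by
    refine Nat.cast_le.mpr (card_le_degree_of_subset_roots fun x hx => ?_)
    have hfne : f ≠ 0 := ne_zero_of_natDegree_gt hf.pos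
    rw [mem_roots hfne]
    exact quadraticChar_eq_zero_iff.mp (Finset.mem_filter.mp hx).2
  have hind (x : ZMod p) : (quadraticChar (ZMod p) (f.eval x) : ℝ)
      = (if quadraticChar (ZMod p) (f.eval x) = 1 then 1 else 0)
        - (if quadraticChar (ZMod p) (f.eval x) = -1 then 1 else 0) ∧
      (1 : ℝ) = (if quadraticChar (ZMod p) (f.eval x) = 1 then 1 else 0)
        + (if quadraticChar (ZMod p) (f.eval x) = -1 then 1 else 0)
        + (if quadraticChar (ZMod p) (f.eval x) = 0 then 1 else 0) := by
    by_cases hx : f.eval x = 0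
    · simp [hx]
    · rcases quadraticChar_dichotomy hx with h | h <;> simp [h]
  have hsum : ∑ x, (quadraticChar (ZMod p) (f.eval x) : ℝ) = (S 1).card - (S (-1)).card := by
    rw [Finset.sum_congr rfl fun x _ => (hind x).1, Finset.sum_sub_distrib, Finset.sum_boole,
      Finset.sum_boole]
  have htotal : (p : ℝ) = (S 1).card + (S (-1)).card + (S 0).card := by
    calc (p : ℝ) = ∑ _x : ZMod p, (1 : ℝ) := by simp [ZMod.card]
      _ = _ := by
        rw [Finset.sum_congr rfl fun x _ => (hind x).2, Finset.sum_add_distrib,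
          Finset.sum_add_distrib, Finset.sum_boole, Finset.sum_boole, Finset.sum_boole]
  have hsqrt : (f.natDegree : ℝ) ≤ f.natDegree * √p := le_mul_of_one_le_right (by positivity)
    (Real.one_le_sqrt.mpr (by exact_mod_cast (Fact.out : p.Prime).one_le))
  rw [hsum, abs_le]
  constructor <;> linarith [hS 1, hS (-1)]

theorem abs_sum_quadraticChar_eval_le (hp : p ≠ 2) {f : (ZMod p)[X]} (hf : Odd f.natDegree) :
    |∑ x, (quadraticChar (ZMod p) (f.eval x) : ℝ)| ≤ 15 * f.natDegree * √p := by
  by_cases hzero : ∀ x, f.eval x = 0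
  · simp only [hzero, MulChar.map_zero, Int.cast_zero, Finset.sum_const_zero, abs_zero]
    positivity
  push Not at hzero
  obtain ⟨c, hc⟩ := hzero
  have hdeg : (f.comp (X + C c)).natDegree = f.natDegree := by
    rw [natDegree_comp, natDegree_X_add_C, mul_one]
  have hbound := abs_sum_quadraticChar_le_of_coeff_zero_ne_zero hp (f := f.comp (X + C c))
    (hdeg.symm ▸ hf) (by simpa [coeff_zero_eq_eval_zero] using hc)
  rw [hdeg] at hbound
  convert hbound using 2
  rw [← Equiv.sum_comp (Equiv.addRight c)]
  simp

end PrimeField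

end Stepanov

section CubicSum

variable {F : Type*} [Field F] [Fintype F] [DecidableEq F]

/-- The character sum `∑ x, χ(x³ + a x + b)` of a pair `v = (a, b)`, i.e. minus the trace of
Frobenius of `y² = x³ + a x + b`. -/
def cubicSum (v : F × F) : ℤ :=
  ∑ x, quadraticChar F (x ^ 3 + v.1 * x + v.2)

lemma cubicSum_twist (v : F × F) {c : F} (hc : c ≠ 0) :
    cubicSum (c ^ 2 * v.1, c ^ 3 * v.2) = quadraticChar F c * cubicSum v := by
  rw [cubicSum, cubicSum, ← Equiv.sum_comp (Equiv.mulLeft₀ c hc), Finset.mul_sum]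
  refine Finset.sum_congr rfl fun x _ => ?_
  have hfactor : (c * x) ^ 3 + c ^ 2 * v.1 * (c * x) + c ^ 3 * v.2
      = c ^ 2 * (c * (x ^ 3 + v.1 * x + v.2)) := by ring
  rw [Equiv.mulLeft₀_apply, hfactor, map_mul, map_mul, quadraticChar_sq_one' hc, one_mul]

lemma cubicSum_zero (hF : ringChar F ≠ 2) : cubicSum (0 : F × F) = 0 := by
  rw [← quadraticChar_sum_zero hF, cubicSum]
  refine Finset.sum_congr rfl fun x _ => ?_
  rcases eq_or_ne x 0 with rfl | hx
  · simp
  · have hcube : x ^ 3 + (0 : F × F).1 * x + (0 : F × F).2 = x ^ 2 * x := by simp; ring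
    rw [hcube, map_mul, quadraticChar_sq_one' hx, one_mul]

/- Twisting by a nonsquare is a bijection on pairs that changes the sign of `cubicSum`. -/
lemma sum_cubicSum_pow_eq_zero (hF : ringChar F ≠ 2) {r : ℕ} (hr : Odd r) :
    ∑ v : F × F, cubicSum v ^ r = 0 := by
  obtain ⟨c, hc⟩ := quadraticChar_exists_neg_one hF
  have hc0 : c ≠ 0 := by
    rintro rfl
    simp at hc
  let twist : F × F ≃ F × F :=
    (Equiv.mulLeft₀ (c ^ 2) (pow_ne_zero 2 hc0)).prodCongr
      (Equiv.mulLeft₀ (c ^ 3) (pow_ne_zero 3 hc0))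
  have htwist (v : F × F) : cubicSum (twist v) = -cubicSum v := by
    have := cubicSum_twist v hc0
    rwa [hc, neg_one_mul] at this
  have hneg : ∑ v : F × F, cubicSum v ^ r = -∑ v : F × F, cubicSum v ^ r := by
    refine (Equiv.sum_comp twist _).symm.trans ?_
    simp only [htwist, hr.neg_pow, Finset.sum_neg_distrib]
  lia

lemma sum_quadraticChar_sq : ∑ x : F, quadraticChar F x ^ 2 = Fintype.card F - 1 := by
  have hsq (x : F) : quadraticChar F x ^ 2 = 1 - if x = 0 then 1 else 0 := by
    split_ifs with hx
    · simp [hx]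
    · rw [quadraticChar_sq_one hx, sub_zero]
  simp only [hsq, Finset.sum_sub_distrib, Finset.sum_ite_eq', Finset.mem_univ, if_true,
    Finset.sum_const, Finset.card_univ, nsmul_eq_mul, mul_one]

lemma sum_quadraticChar_mul_of_ne (hF : ringChar F ≠ 2) {x y : F} (hxy : x ≠ y) :
    ∑ v : F × F, quadraticChar F (x ^ 3 + v.1 * x + v.2) *
      quadraticChar F (y ^ 3 + v.1 * y + v.2) = 0 := by
  let φ (v : F × F) : F × F := (x ^ 3 + v.1 * x + v.2, y ^ 3 + v.1 * y + v.2)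
  have hφ : Function.Bijective φ := by
    refine Finite.injective_iff_bijective.mp fun v w h => ?_
    obtain ⟨h1, h2⟩ := Prod.ext_iff.mp h
    dsimp only [φ] at h1 h2
    have hfst : v.1 = w.1 :=
      mul_right_cancel₀ (sub_ne_zero.mpr hxy) (by linear_combination h1 - h2)
    exact Prod.ext hfst (by linear_combination h1 - x * hfst)
  rw [hφ.sum_comp fun w => quadraticChar F w.1 * quadraticChar F w.2, Fintype.sum_prod_type]
  simp only [← Finset.mul_sum, quadraticChar_sum_zero hF, mul_zero, Finset.sum_const_zero]

lemma sum_quadraticChar_mul_self (x : F) :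
    ∑ v : F × F, quadraticChar F (x ^ 3 + v.1 * x + v.2) *
      quadraticChar F (x ^ 3 + v.1 * x + v.2) = Fintype.card F * (Fintype.card F - 1) := by
  have hinner (a : F) : ∑ b, quadraticChar F (x ^ 3 + a * x + b) *
      quadraticChar F (x ^ 3 + a * x + b) = Fintype.card F - 1 := by
    rw [← sum_quadraticChar_sq]
    exact Fintype.sum_equiv (Equiv.addLeft (x ^ 3 + a * x)) _ _ fun b => (pow_two _).symm
  simp only [Fintype.sum_prod_type, hinner, Finset.sum_const, Finset.card_univ, nsmul_eq_mul]

lemma sum_cubicSum_sq (hF : ringChar F ≠ 2) :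
    ∑ v : F × F, cubicSum v ^ 2 = (Fintype.card F : ℤ) ^ 2 * (Fintype.card F - 1) := by
  have hpair (x y : F) : ∑ v : F × F, quadraticChar F (x ^ 3 + v.1 * x + v.2) *
      quadraticChar F (y ^ 3 + v.1 * y + v.2)
      = if x = y then (Fintype.card F : ℤ) * (Fintype.card F - 1) else 0 := by
    split_ifs with hxy
    · rw [← hxy, sum_quadraticChar_mul_self]
    · exact sum_quadraticChar_mul_of_ne hF hxy
  calc ∑ v : F × F, cubicSum v ^ 2
      = ∑ x : F, ∑ y : F, ∑ v : F × F, quadraticChar F (x ^ 3 + v.1 * x + v.2) *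
          quadraticChar F (y ^ 3 + v.1 * y + v.2) := by
        simp only [cubicSum, pow_two (∑ _, _), Finset.sum_mul_sum]
        rw [Finset.sum_comm]
        exact Finset.sum_congr rfl fun x _ => Finset.sum_comm
    _ = (Fintype.card F : ℤ) ^ 2 * (Fintype.card F - 1) := by
        simp only [hpair, Finset.sum_ite_eq, Finset.mem_univ, if_true, Finset.sum_const,
          Finset.card_univ, nsmul_eq_mul]
        ring

lemma ncard_affineCubic (hF : ringChar F ≠ 2) (v : F × F) :
    ({w : F × F | w.2 ^ 2 = w.1 ^ 3 + v.1 * w.1 + v.2}.ncard : ℤ)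
      = Fintype.card F + cubicSum v := by
  have hfibre : {w : F × F | w.2 ^ 2 = w.1 ^ 3 + v.1 * w.1 + v.2}
      = ((Finset.univ.sigma fun x : F =>
          ({y : F | y ^ 2 = x ^ 3 + v.1 * x + v.2} : Set F).toFinset).map
            (Equiv.sigmaEquivProd F F).toEmbedding : Finset (F × F)) := by
    ext ⟨x, y⟩
    simp
  rw [hfibre, Set.ncard_coe_finset, Finset.card_map, Finset.card_sigma, Nat.cast_sum,
    Finset.sum_congr rfl fun x _ => quadraticChar_card_sqrts hF _, Finset.sum_add_distrib,
    cubicSum]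
  simp [add_comm]

lemma card_filter_sq_eq_le_two (c : F) : (Finset.univ.filter fun y : F => y ^ 2 = c).card ≤ 2 := by
  calc (Finset.univ.filter fun y : F => y ^ 2 = c).card
      ≤ (Polynomial.nthRoots 2 c).toFinset.card := Finset.card_le_card fun y hy => by
        simpa [Polynomial.mem_nthRoots] using hy
    _ ≤ 2 := (Multiset.toFinset_card_le _).trans (Polynomial.card_nthRoots 2 c)

lemma card_singular_le (h3 : (3 : F) ≠ 0) :
    (Finset.univ.filter fun v : F × F => 4 * v.1 ^ 3 + 27 * v.2 ^ 2 = 0).card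
      ≤ 2 * Fintype.card F := by
  have h27 : (27 : F) ≠ 0 := by
    have := pow_ne_zero 3 h3
    norm_num at this
    exact this
  refine (Finset.card_le_mul_card_image (f := Prod.fst) _ 2 fun a _ => ?_).trans
    (Nat.mul_le_mul_left 2 (Finset.card_le_univ _))
  refine le_trans (Finset.card_le_card_of_injOn Prod.snd (fun v hv => ?_) fun v hv w hw h => ?_)
    (card_filter_sq_eq_le_two (-(4 * a ^ 3) / 27))
  · simp only [Finset.coe_filter, Finset.mem_filter, Finset.mem_univ, true_and,
      Set.mem_ofPred_eq] at hv ⊢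
    rw [eq_div_iff h27, ← hv.2]
    linear_combination hv.1
  · simp only [Finset.coe_filter, Set.mem_ofPred_eq] at hv hw
    exact Prod.ext (hv.2.trans hw.2.symm) h

end CubicSum

section ProjectiveCubic

open scoped LinearAlgebra.Projectivization

variable {F : Type*} [Field F]

/-- The points of the projective plane cubic `y² z = x³ + a x z² + b z³`, where `v = (a, b)`. -/
def projCubic (v : F × F) : Set (ℙ F (Fin 3 → F)) :=
  {P | P.rep 1 ^ 2 * P.rep 2 = P.rep 0 ^ 3 + v.1 * P.rep 0 * P.rep 2 ^ 2 + v.2 * P.rep 2 ^ 3}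

lemma mk_mem_projCubic_iff (v : F × F) {w : Fin 3 → F} (hw : w ≠ 0) :
    Projectivization.mk F w hw ∈ projCubic v ↔
      w 1 ^ 2 * w 2 = w 0 ^ 3 + v.1 * w 0 * w 2 ^ 2 + v.2 * w 2 ^ 3 := by
  obtain ⟨c, hc⟩ := Projectivization.exists_smul_eq_mk_rep F w hw
  have hc0 : (c : F) ^ 3 ≠ 0 := pow_ne_zero 3 c.ne_zero
  rw [projCubic, Set.mem_ofPred_eq, ← hc]
  simp only [Pi.smul_apply, Units.smul_def, smul_eq_mul]
  constructor <;> intro h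
  · exact mul_left_cancel₀ hc0 (by linear_combination h)
  · linear_combination (c : F) ^ 3 * h

/-- The point `[x : y : 1]` of the projective plane. -/
def affinePoint (w : F × F) : ℙ F (Fin 3 → F) :=
  Projectivization.mk F ![w.1, w.2, 1] fun h => one_ne_zero (congrFun h 2)

/-- The point `[0 : 1 : 0]` of the projective plane. -/
def pointAtInfinity (F : Type*) [Field F] : ℙ F (Fin 3 → F) :=
  Projectivization.mk F ![0, 1, 0] fun h => one_ne_zero (congrFun h 1)

lemma affinePoint_injective : Function.Injective (affinePoint (F := F)) := by
  intro u w h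
  obtain ⟨c, hc⟩ := (Projectivization.mk_eq_mk_iff' F _ _ _ _).mp h
  have hc1 : c = 1 := by simpa using congrFun hc 2
  subst hc1
  exact Prod.ext (by simpa using (congrFun hc 0).symm) (by simpa using (congrFun hc 1).symm)

lemma affinePoint_ne_pointAtInfinity (w : F × F) : affinePoint w ≠ pointAtInfinity F := by
  intro h
  obtain ⟨c, hc⟩ := (Projectivization.mk_eq_mk_iff' F _ _ _ _).mp h
  simpa using congrFun hc 2

lemma affinePoint_mem_projCubic_iff (v w : F × F) :
    affinePoint w ∈ projCubic v ↔ w.2 ^ 2 = w.1 ^ 3 + v.1 * w.1 + v.2 := by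
  rw [affinePoint, mk_mem_projCubic_iff]
  simp

lemma projCubic_eq_insert (v : F × F) :
    projCubic v = insert (pointAtInfinity F)
      (affinePoint '' {w : F × F | w.2 ^ 2 = w.1 ^ 3 + v.1 * w.1 + v.2}) := by
  ext P
  constructor
  · induction P using Projectivization.ind with | h w hw =>
    intro hP
    rw [mk_mem_projCubic_iff] at hP
    by_cases hz : w 2 = 0
    · left
      have hx : w 0 = 0 := pow_eq_zero_iff three_ne_zero |>.mp (by simpa [hz] using hP.symm)
      refine (Projectivization.mk_eq_mk_iff' F _ _ _ _).mpr ⟨w 1, ?_⟩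
      ext i
      fin_cases i <;> simp [hx, hz]
    · right
      have hmk : affinePoint (w 0 / w 2, w 1 / w 2) = Projectivization.mk F w hw := by
        refine (Projectivization.mk_eq_mk_iff' F _ _ _ _).mpr ⟨(w 2)⁻¹, ?_⟩
        ext i
        fin_cases i <;> simp [hz, div_eq_inv_mul]
      refine ⟨_, (affinePoint_mem_projCubic_iff _ _).mp ?_, hmk⟩
      rwa [hmk, mk_mem_projCubic_iff]
  · rintro (rfl | ⟨w, hw, rfl⟩)
    · rw [pointAtInfinity, mk_mem_projCubic_iff]
      simp
    · exact (affinePoint_mem_projCubic_iff v w).mpr hw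

lemma ncard_projCubic [Fintype F] [DecidableEq F] (hF : ringChar F ≠ 2) (v : F × F) :
    ((projCubic v).ncard : ℤ) = Fintype.card F + 1 + cubicSum v := by
  have hinf : pointAtInfinity F ∉
      affinePoint '' {w : F × F | w.2 ^ 2 = w.1 ^ 3 + v.1 * w.1 + v.2} := by
    rintro ⟨w, -, h⟩
    exact affinePoint_ne_pointAtInfinity w h
  rw [projCubic_eq_insert, Set.ncard_insert_of_notMem hinf,
    Set.ncard_image_of_injective _ affinePoint_injective, Nat.cast_add_one, ncard_affineCubic hF]
  ring

end ProjectiveCubic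

section ScaleInvariant

variable {R : Type*} [CommRing R]

/-- The action `(a, b) ↦ (d⁴ a, d⁶ b)` on coefficients of short Weierstrass equations. -/
def weightedScale (d : R) (v : R × R) : R × R :=
  (d ^ 4 * v.1, d ^ 6 * v.2)

/-- A function of the coefficients of a Weierstrass equation that is unchanged by weighted scaling
by a unit, and that vanishes on the weighted scalings by nonunits. -/
def IsScaleInvariant (g : R × R → ℝ) : Prop :=
  ∀ d v, (IsUnit d → g (weightedScale d v) = g v) ∧ (¬ IsUnit d → g (weightedScale d v) = 0)

lemma IsScaleInvariant.sub {g h : R × R → ℝ} (hg : IsScaleInvariant g) (hh : IsScaleInvariant h) :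
    IsScaleInvariant fun v => g v - h v := fun d v =>
  ⟨fun hd => by simp only [(hg d v).1 hd, (hh d v).1 hd],
    fun hd => by simp only [(hg d v).2 hd, (hh d v).2 hd, sub_zero]⟩

lemma IsScaleInvariant.comp_ringEquiv {S : Type*} [CommRing S] {g : R × R → ℝ}
    (hg : IsScaleInvariant g) (φ : S ≃+* R) :
    IsScaleInvariant fun v : S × S => g (φ v.1, φ v.2) := by
  intro d v
  have hscale : (φ (weightedScale d v).1, φ (weightedScale d v).2)
      = weightedScale (φ d) (φ v.1, φ v.2) := by simp [weightedScale]
  have hunit : IsUnit d ↔ IsUnit (φ d) := (MulEquiv.isUnit_map φ).symm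
  simp only [hscale, hunit]
  exact hg (φ d) _

lemma IsScaleInvariant.prod_pi {ι : Type*} [Fintype ι] {S : ι → Type*} [∀ i, CommRing (S i)]
    {g : ∀ i, S i × S i → ℝ} (hg : ∀ i, IsScaleInvariant (g i)) :
    IsScaleInvariant fun v : (∀ i, S i) × (∀ i, S i) => ∏ i, g i (v.1 i, v.2 i) := by
  intro d v
  have hscale (i : ι) : ((weightedScale d v).1 i, (weightedScale d v).2 i)
      = weightedScale (d i) (v.1 i, v.2 i) := rfl
  simp only [hscale]
  refine ⟨fun hd => Finset.prod_congr rfl fun i _ => (hg i _ _).1 (Pi.isUnit_iff.mp hd i),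
    fun hd => ?_⟩
  obtain ⟨i, hi⟩ := not_forall.mp (mt Pi.isUnit_iff.mpr hd)
  exact Finset.prod_eq_zero (Finset.mem_univ i) ((hg i _ _).2 hi)

lemma isScaleInvariant_of_field {F : Type*} [Field F] {g : F × F → ℝ} (h0 : g 0 = 0)
    (hg : ∀ d ≠ 0, ∀ v, g (weightedScale d v) = g v) : IsScaleInvariant g := by
  refine fun d v => ⟨fun hd => hg d hd.ne_zero v, fun hd => ?_⟩
  obtain rfl : d = 0 := by simpa using hd
  convert h0
  simp [weightedScale]

end ScaleInvariant

section FrobCoeff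

variable {F : Type*} [Field F] [Fintype F] [DecidableEq F]

/-- The normalized trace of Frobenius `â(p)` of `y² = x³ + a x + b` as a function of the
coefficients `v = (a, b)` in a finite field. -/
noncomputable def normTrace (v : F × F) : ℝ :=
  -cubicSum v / √(Fintype.card F)

/-- The normalized coefficient `â(p^e)`, for `e ∈ {1, 2}`, of `y² = x³ + a x + b` as a function of
the coefficients `v = (a, b)` in a finite field; any `e ≠ 2` is read as `1`. -/
noncomputable def frobCoeff (e : ℕ) (v : F × F) : ℝ :=
  if e = 2 then
    if 4 * v.1 ^ 3 + 27 * v.2 ^ 2 = 0 then normTrace v ^ 2 else normTrace v ^ 2 - 2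
  else normTrace v

lemma normTrace_weightedScale {d : F} (hd : d ≠ 0) (v : F × F) :
    normTrace (weightedScale d v) = normTrace v := by
  have htwist := cubicSum_twist v (pow_ne_zero 2 hd)
  rw [quadraticChar_sq_one' hd, one_mul, ← pow_mul, ← pow_mul] at htwist
  rw [normTrace, weightedScale, htwist, normTrace]

lemma isScaleInvariant_frobCoeff_pow (hF : ringChar F ≠ 2) (e : ℕ) {r : ℕ} (hr : r ≠ 0) :
    IsScaleInvariant fun v : F × F => frobCoeff e v ^ r := by
  refine isScaleInvariant_of_field (by simp [frobCoeff, normTrace, cubicSum_zero hF, hr])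
    fun d hd v => ?_
  have hdisc : 4 * (weightedScale d v).1 ^ 3 + 27 * (weightedScale d v).2 ^ 2
      = d ^ 12 * (4 * v.1 ^ 3 + 27 * v.2 ^ 2) := by
    rw [weightedScale]
    ring
  simp only [frobCoeff, normTrace_weightedScale hd, hdisc, mul_eq_zero, pow_eq_zero_iff,
    ne_eq, OfNat.ofNat_ne_zero, not_false_eq_true, hd, false_or]

lemma sum_frobCoeff_one_pow_eq_zero (hF : ringChar F ≠ 2) {r : ℕ} (hr : Odd r) :
    ∑ v : F × F, frobCoeff 1 v ^ r = 0 := by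
  have hcast : ∑ v : F × F, (cubicSum v : ℝ) ^ r = 0 := by
    exact_mod_cast sum_cubicSum_pow_eq_zero hF hr
  simp only [frobCoeff, OfNat.one_ne_ofNat, if_false, normTrace, div_pow, hr.neg_pow,
    ← Finset.sum_div, Finset.sum_neg_distrib, hcast, neg_zero, zero_div]

lemma sum_normTrace_sq (hF : ringChar F ≠ 2) :
    ∑ v : F × F, normTrace v ^ 2 = Fintype.card F * (Fintype.card F - 1 : ℝ) := by
  have hq : (Fintype.card F : ℝ) ≠ 0 := Nat.cast_ne_zero.mpr Fintype.card_ne_zero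
  have hcast : ∑ v : F × F, (cubicSum v : ℝ) ^ 2
      = (Fintype.card F : ℝ) ^ 2 * (Fintype.card F - 1) := by
    exact_mod_cast sum_cubicSum_sq hF
  simp only [normTrace, div_pow, neg_sq, Real.sq_sqrt (Nat.cast_nonneg _), ← Finset.sum_div, hcast]
  field_simp

lemma sum_frobCoeff_two (hF : ringChar F ≠ 2) :
    ∑ v : F × F, frobCoeff 2 v = Fintype.card F * (Fintype.card F - 1 : ℝ)
      - 2 * Fintype.card F ^ 2
      + 2 * (Finset.univ.filter fun v : F × F => 4 * v.1 ^ 3 + 27 * v.2 ^ 2 = 0).card := by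
  have hsplit (v : F × F) : frobCoeff 2 v
      = normTrace v ^ 2 - 2 + 2 * if 4 * v.1 ^ 3 + 27 * v.2 ^ 2 = 0 then 1 else 0 := by
    rw [frobCoeff, if_pos rfl]
    split_ifs <;> ring
  simp only [hsplit, Finset.sum_add_distrib, Finset.sum_sub_distrib, sum_normTrace_sq hF,
    ← Finset.mul_sum, Finset.sum_boole, Finset.sum_const, Finset.card_univ, Fintype.card_prod,
    nsmul_eq_mul, Nat.cast_mul]
  ring

/-- The limiting mean `±1` of the even moments considered here. -/
noncomputable def evenMean (e : ℕ) : ℝ :=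
  if e = 2 then -1 else 1

lemma abs_sum_frobCoeff_pow_sub_le (hF : ringChar F ≠ 2) (h3 : (3 : F) ≠ 0) {e r : ℕ}
    (her : (e = 1 ∧ r = 2) ∨ (e = 2 ∧ r = 1)) :
    |(∑ v : F × F, frobCoeff e v ^ r) - evenMean e * ((Fintype.card F : ℝ) ^ 2 - 1)|
      ≤ 3 * (Fintype.card F : ℝ) := by
  have hq : (1 : ℝ) ≤ Fintype.card F := Nat.one_le_cast.mpr Fintype.card_pos
  have hsing : ((Finset.univ.filter fun v : F × F => 4 * v.1 ^ 3 + 27 * v.2 ^ 2 = 0).card : ℝ)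
      ≤ 2 * Fintype.card F := by exact_mod_cast card_singular_le h3
  rcases her with ⟨rfl, rfl⟩ | ⟨rfl, rfl⟩
  · simp only [frobCoeff, evenMean, OfNat.one_ne_ofNat, if_false, sum_normTrace_sq hF]
    rw [abs_le]
    constructor <;> nlinarith
  · simp only [evenMean, if_true, pow_one, sum_frobCoeff_two hF]
    rw [abs_le]
    constructor <;> nlinarith

end FrobCoeff

section PrimeFrobCoeff

variable {p : ℕ} [Fact p.Prime]

lemma abs_cubicSum_le (hp : p ≠ 2) (v : ZMod p × ZMod p) : |(cubicSum v : ℝ)| ≤ 45 * √p := by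
  let f : Polynomial (ZMod p) := .X ^ 3 + .C v.1 * .X + .C v.2
  have hdeg : f.natDegree = 3 := by
    dsimp only [f]
    compute_degree!
  have hbound := abs_sum_quadraticChar_eval_le hp (f := f) (hdeg ▸ by decide)
  rw [hdeg] at hbound
  norm_num [f] at hbound
  simpa [cubicSum] using hbound

lemma abs_frobCoeff_le (hp : p ≠ 2) (e : ℕ) (v : ZMod p × ZMod p) :
    |frobCoeff e v| ≤ 45 ^ 2 := by
  have hp0 : (0 : ℝ) < p := Nat.cast_pos.mpr (Fact.out : p.Prime).pos
  have htrace : |normTrace v| ≤ 45 := by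
    rw [normTrace, ZMod.card, abs_div, abs_neg, abs_of_nonneg (Real.sqrt_nonneg _),
      div_le_iff₀ (Real.sqrt_pos.mpr hp0)]
    exact abs_cubicSum_le hp v
  have hsq : normTrace v ^ 2 ≤ 45 ^ 2 := sq_le_sq' (by linarith [neg_le_of_abs_le htrace])
    (le_of_abs_le htrace)
  have hsq0 := sq_nonneg (normTrace v)
  rw [frobCoeff]
  split_ifs
  · rw [abs_le]; constructor <;> linarith
  · rw [abs_le]; constructor <;> linarith
  · linarith

/-- The reduction of a pair of integers to a pair of elements of `R`. -/
def castPair (R : Type*) [Ring R] (AB : ℤ × ℤ) : R × R :=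
  (AB.1, AB.2)

lemma apFrob_eq_neg_cubicSum (hp : p.Prime) (hp2 : p ≠ 2) (A B : ℤ) :
    apFrob p hp A B = -cubicSum (castPair (ZMod p) (A, B)) := by
  have hNp : (Np p hp A B : ℤ) = p + 1 + cubicSum (castPair (ZMod p) (A, B)) := by
    have := ncard_projCubic (by rwa [ZMod.ringChar_zmod_n]) (castPair (ZMod p) (A, B))
    rwa [ZMod.card] at this
  rw [apFrob, hNp]
  ring

lemma ahatPow_eq_frobCoeff (hp : p.Prime) (hp2 : p ≠ 2) (A B : ℤ) (e : ℕ) :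
    ahatPow p hp A B e = frobCoeff e (castPair (ZMod p) (A, B)) := by
  have hdisc : (p : ℤ) ∣ 4 * A ^ 3 + 27 * B ^ 2 ↔
      4 * (A : ZMod p) ^ 3 + 27 * (B : ZMod p) ^ 2 = 0 := by
    rw [← ZMod.intCast_zmod_eq_zero_iff_dvd]
    push_cast
    rfl
  have htrace : ahat p hp A B = normTrace (castPair (ZMod p) (A, B)) := by
    rw [ahat, apFrob_eq_neg_cubicSum hp hp2, normTrace, ZMod.card, Int.cast_neg]
  simp only [ahatPow, frobCoeff, htrace, castPair, hdisc]
  congr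

end PrimeFrobCoeff

section Equidistribution

lemma card_Icc_neg (N : ℕ) : ((Finset.Icc (-N : ℤ) N).card : ℝ) = 2 * N + 1 := by
  have : ((Finset.Icc (-N : ℤ) N).card : ℤ) = 2 * N + 1 := by
    rw [Int.card_Icc_of_le _ _ (by lia)]
    ring
  exact_mod_cast this

variable {P : ℕ} [NeZero P]

lemma abs_card_filter_cast_eq_sub_le (N : ℕ) (x : ZMod P) :
    |(((Finset.Icc (-N : ℤ) N).filter fun n : ℤ => (n : ZMod P) = x).card : ℝ)
      - (2 * N + 1) / P| ≤ 1 := by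
  obtain ⟨c, rfl⟩ := ZMod.intCast_surjective x
  have hP : (0 : ℤ) < P := Nat.cast_pos.mpr (NeZero.pos P)
  set u : ℚ := ((N : ℤ) - c) / (P : ℤ)
  set v : ℚ := ((-N - 1 : ℤ) - c) / (P : ℤ)
  have hvu : v ≤ u := by
    dsimp only [u, v]
    push_cast
    gcongr
    linarith [(Nat.cast_nonneg N : (0 : ℚ) ≤ N)]
  have hcard : (((Finset.Icc (-N : ℤ) N).filter fun n : ℤ => (n : ZMod P) = c).card : ℤ)
      = ⌊u⌋ - ⌊v⌋ := by
    rw [← Finset.Ioc_pred_left_eq_Icc, Order.pred_eq_sub_one]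
    simp only [ZMod.intCast_eq_intCast_iff, Int.Ioc_filter_modEq_card _ _ hP]
    exact max_eq_left (sub_nonneg.mpr (Int.floor_le_floor hvu))
  have hlen : u - v = (2 * N + 1) / P := by
    dsimp only [u, v]
    push_cast
    ring
  have hbound : |((⌊u⌋ - ⌊v⌋ : ℤ) : ℚ) - (2 * N + 1) / P| ≤ 1 := by
    rw [← hlen, abs_le]
    push_cast
    constructor <;> linarith [Int.floor_le u, Int.lt_floor_add_one u, Int.floor_le v,
      Int.lt_floor_add_one v]
  rw [← hcard, ← Rat.cast_le (K := ℝ)] at hbound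
  push_cast at hbound
  exact hbound

lemma abs_sum_Icc_cast_sub_le {h : ZMod P → ℝ} {K : ℝ} (hK : ∀ x, |h x| ≤ K) (N : ℕ) :
    |∑ n ∈ Finset.Icc (-N : ℤ) N, h n - (2 * N + 1) / P * ∑ x, h x| ≤ P * K := by
  let c (x : ZMod P) := ((Finset.Icc (-N : ℤ) N).filter fun n : ℤ => (n : ZMod P) = x).card
  have hcount : ∑ n ∈ Finset.Icc (-N : ℤ) N, h n = ∑ x, c x * h x := by
    rw [← Finset.sum_fiberwise (Finset.Icc (-N : ℤ) N) (fun n : ℤ => (n : ZMod P))]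
    refine Finset.sum_congr rfl fun x _ => ?_
    rw [Finset.sum_congr rfl fun n hn => by rw [(Finset.mem_filter.mp hn).2], Finset.sum_const,
      nsmul_eq_mul]
  calc |∑ n ∈ Finset.Icc (-N : ℤ) N, h n - (2 * N + 1) / P * ∑ x, h x|
      = |∑ x, (c x - (2 * N + 1) / P) * h x| := by
        simp only [hcount, Finset.mul_sum, ← Finset.sum_sub_distrib, sub_mul]
    _ ≤ ∑ x, |(c x - (2 * N + 1) / P) * h x| := Finset.abs_sum_le_sum_abs _ _
    _ ≤ ∑ _x : ZMod P, K := by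
        refine Finset.sum_le_sum fun x _ => ?_
        rw [abs_mul]
        exact (mul_le_of_le_one_left (abs_nonneg _) (abs_card_filter_cast_eq_sub_le N x)).trans
          (hK x)
    _ = P * K := by simp

lemma abs_sum_prod_Icc_castPair_le {g : ZMod P × ZMod P → ℝ} {K : ℝ} (hK : ∀ v, |g v| ≤ K)
    (hsum : ∑ v, g v = 0) (N M : ℕ) :
    |∑ v ∈ Finset.Icc (-N : ℤ) N ×ˢ Finset.Icc (-M : ℤ) M, g (castPair _ v)|
      ≤ K * P * ((2 * N + 1) + (2 * M + 1)) := by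
  have hP : (0 : ℝ) < P := Nat.cast_pos.mpr (NeZero.pos P)
  let G (a : ZMod P) := ∑ b, g (a, b)
  have hinner (A : ℤ) :
      |∑ B ∈ Finset.Icc (-M : ℤ) M, g (A, B) - (2 * M + 1) / P * G A| ≤ P * K :=
    abs_sum_Icc_cast_sub_le (fun b => hK (A, b)) M
  have hG (a : ZMod P) : |G a| ≤ P * K :=
    (Finset.abs_sum_le_sum_abs _ _).trans
      ((Finset.sum_le_card_nsmul _ _ K fun b _ => hK (a, b)).trans_eq (by simp))
  have houter : |∑ A ∈ Finset.Icc (-N : ℤ) N, G A| ≤ P * (P * K) := by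
    have := abs_sum_Icc_cast_sub_le hG N
    rwa [← Fintype.sum_prod_type, hsum, mul_zero, sub_zero] at this
  have hsplit : ∑ v ∈ Finset.Icc (-N : ℤ) N ×ˢ Finset.Icc (-M : ℤ) M, g (castPair _ v)
      = ∑ A ∈ Finset.Icc (-N : ℤ) N,
          (∑ B ∈ Finset.Icc (-M : ℤ) M, g (A, B) - (2 * M + 1) / P * G A)
        + (2 * M + 1) / P * ∑ A ∈ Finset.Icc (-N : ℤ) N, G A := by
    rw [Finset.sum_product, Finset.sum_sub_distrib, ← Finset.mul_sum, sub_add_cancel]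
    rfl
  rw [hsplit]
  refine (abs_add_le _ _).trans ?_
  calc _ ≤ (2 * N + 1) * (P * K) + (2 * M + 1) / P * (P * (P * K)) := by
        refine add_le_add ((Finset.abs_sum_le_sum_abs _ _).trans
          ((Finset.sum_le_card_nsmul _ _ _ fun A _ => hinner A).trans_eq ?_)) ?_
        · rw [nsmul_eq_mul, card_Icc_neg]
        · rw [abs_mul, abs_of_nonneg (by positivity)]
          gcongr
    _ = K * P * ((2 * N + 1) + (2 * M + 1)) := by
        field_simp

end Equidistribution

section HeightBox

lemma mem_Icc_neg_floor_iff {y : ℝ} (hy : 0 ≤ y) (a : ℤ) :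
    a ∈ Finset.Icc (-⌊y⌋₊ : ℤ) ⌊y⌋₊ ↔ |(a : ℝ)| ≤ y := by
  rw [Finset.mem_Icc, ← abs_le, Int.abs_eq_natAbs, Nat.cast_le, Nat.le_floor_iff hy,
    Nat.cast_natAbs, Int.cast_abs]

/-- The pairs `(A, B)` of integers of height `max(|A|³, B²)` at most `X`. -/
noncomputable def heightBox (X : ℝ) : Finset (ℤ × ℤ) :=
  Finset.Icc (-⌊X ^ (3⁻¹ : ℝ)⌋₊ : ℤ) ⌊X ^ (3⁻¹ : ℝ)⌋₊ ×ˢ Finset.Icc (-⌊√X⌋₊ : ℤ) ⌊√X⌋₊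

variable {X : ℝ}

lemma mem_heightBox_iff (hX : 0 ≤ X) {v : ℤ × ℤ} :
    v ∈ heightBox X ↔ |(v.1 : ℝ)| ^ 3 ≤ X ∧ (v.2 : ℝ) ^ 2 ≤ X := by
  rw [heightBox, Finset.mem_product, mem_Icc_neg_floor_iff (Real.rpow_nonneg hX _),
    mem_Icc_neg_floor_iff (Real.sqrt_nonneg _),
    Real.le_rpow_inv_iff_of_pos (abs_nonneg _) hX three_pos, Real.le_sqrt (abs_nonneg _) hX, sq_abs]
  norm_cast

lemma rpow_third_le_sqrt (hX : 1 ≤ X) : X ^ (3⁻¹ : ℝ) ≤ √X := by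
  rw [Real.sqrt_eq_rpow]
  exact Real.rpow_le_rpow_of_exponent_le hX (by norm_num)

lemma rpow_third_mul_sqrt (hX : 1 ≤ X) : X ^ (3⁻¹ : ℝ) * √X = X ^ (5 / 6 : ℝ) := by
  rw [Real.sqrt_eq_rpow, ← Real.rpow_add (by linarith)]
  norm_num

lemma card_heightBox_le (hX : 1 ≤ X) : ((heightBox X).card : ℝ) ≤ 9 * X ^ (5 / 6 : ℝ) := by
  have hroot : 1 ≤ X ^ (3⁻¹ : ℝ) := Real.one_le_rpow hX (by norm_num)
  have hsqrt : 1 ≤ √X := Real.one_le_sqrt.mpr hX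
  have hN : (⌊X ^ (3⁻¹ : ℝ)⌋₊ : ℝ) ≤ X ^ (3⁻¹ : ℝ) := Nat.floor_le (by positivity)
  have hM : (⌊√X⌋₊ : ℝ) ≤ √X := Nat.floor_le (by positivity)
  rw [heightBox, Finset.card_product, Nat.cast_mul, card_Icc_neg, card_Icc_neg,
    ← rpow_third_mul_sqrt hX]
  calc (2 * ⌊X ^ (3⁻¹ : ℝ)⌋₊ + 1 : ℝ) * (2 * ⌊√X⌋₊ + 1)
      ≤ (3 * X ^ (3⁻¹ : ℝ)) * (3 * √X) := by gcongr <;> linarith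
    _ = 9 * (X ^ (3⁻¹ : ℝ) * √X) := by ring

lemma card_heightBox_filter_dvd_le (hX : 1 ≤ X) (q : ℕ) [NeZero q] :
    (((heightBox X).filter fun v => castPair (ZMod q) v = 0).card : ℝ)
      ≤ 9 * (X ^ (5 / 6 : ℝ) / q + √X) := by
  have hq : (1 : ℝ) ≤ q := Nat.one_le_cast.mpr NeZero.one_le
  have hroot : 1 ≤ X ^ (3⁻¹ : ℝ) := Real.one_le_rpow hX (by norm_num)
  have hsqrt : X ^ (3⁻¹ : ℝ) ≤ √X := rpow_third_le_sqrt hX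
  have hN : (⌊X ^ (3⁻¹ : ℝ)⌋₊ : ℝ) ≤ X ^ (3⁻¹ : ℝ) := Nat.floor_le (by positivity)
  have hM : (⌊√X⌋₊ : ℝ) ≤ √X := Nat.floor_le (by positivity)
  have hcount (N : ℕ) : (((Finset.Icc (-N : ℤ) N).filter fun n : ℤ => (n : ZMod q) = 0).card : ℝ)
      ≤ (2 * N + 1) / q + 1 := by
    linarith [le_of_abs_le (abs_card_filter_cast_eq_sub_le N (0 : ZMod q))]
  have hprod : (heightBox X).filter (fun v => castPair (ZMod q) v = 0)
      = (Finset.Icc (-⌊X ^ (3⁻¹ : ℝ)⌋₊ : ℤ) ⌊X ^ (3⁻¹ : ℝ)⌋₊).filter (fun n : ℤ => (n : ZMod q) = 0)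
        ×ˢ (Finset.Icc (-⌊√X⌋₊ : ℤ) ⌊√X⌋₊).filter (fun n : ℤ => (n : ZMod q) = 0) := by
    rw [heightBox, ← Finset.filter_product]
    simp only [castPair, Prod.ext_iff, Prod.fst_zero, Prod.snd_zero]
  rw [hprod, Finset.card_product, Nat.cast_mul]
  calc _ ≤ ((2 * ⌊X ^ (3⁻¹ : ℝ)⌋₊ + 1 : ℝ) / q + 1) * ((2 * ⌊√X⌋₊ + 1) / q + 1) :=
        mul_le_mul (hcount _) (hcount _) (by positivity) (by positivity)
    _ ≤ (3 * X ^ (3⁻¹ : ℝ) / q + 1) * (3 * √X / q + 1) := by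
        gcongr <;> linarith
    _ = 9 * (X ^ (3⁻¹ : ℝ) * √X) / q / q + 3 * X ^ (3⁻¹ : ℝ) / q + 3 * √X / q + 1 := by ring
    _ ≤ 9 * (X ^ (3⁻¹ : ℝ) * √X) / q + 3 * X ^ (3⁻¹ : ℝ) + 3 * √X + 1 := by
        gcongr <;> exact div_le_self (by positivity) hq
    _ ≤ 9 * (X ^ (5 / 6 : ℝ) / q + √X) := by
        rw [rpow_third_mul_sqrt hX, mul_div_assoc]
        linarith

lemma abs_sum_heightBox_le {P : ℕ} [NeZero P] {g : ZMod P × ZMod P → ℝ} {K : ℝ}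
    (hK : ∀ v, |g v| ≤ K) (hsum : ∑ v, g v = 0) (hX : 1 ≤ X) :
    |∑ v ∈ heightBox X, g (castPair _ v)| ≤ 6 * K * P * √X := by
  have hK0 : 0 ≤ K := (abs_nonneg _).trans (hK 0)
  have hN : (⌊X ^ (3⁻¹ : ℝ)⌋₊ : ℝ) ≤ X ^ (3⁻¹ : ℝ) := Nat.floor_le (by positivity)
  have hM : (⌊√X⌋₊ : ℝ) ≤ √X := Nat.floor_le (by positivity)
  have hroot := rpow_third_le_sqrt hX
  have hsqrt : 1 ≤ √X := Real.one_le_sqrt.mpr hX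
  refine (abs_sum_prod_Icc_castPair_le hK hsum _ _).trans ?_
  calc K * P * ((2 * ⌊X ^ (3⁻¹ : ℝ)⌋₊ + 1) + (2 * ⌊√X⌋₊ + 1)) ≤ K * P * (6 * √X) := by
        gcongr
        linarith
    _ = 6 * K * P * √X := by ring

end HeightBox

section Primitive

lemma castPair_weightedScale (R : Type*) [CommRing R] (d : ℕ) (v : ℤ × ℤ) :
    castPair R (weightedScale (d : ℤ) v) = weightedScale (d : R) (castPair R v) := by
  simp [castPair, weightedScale]

lemma weightedScale_mul {R : Type*} [CommRing R] (c d : R) (v : R × R) :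
    weightedScale (c * d) v = weightedScale c (weightedScale d v) := by
  simp only [weightedScale, mul_pow, mul_assoc]

lemma weightedScale_injective {R : Type*} [CommRing R] [IsDomain R] {d : R} (hd : d ≠ 0) :
    Function.Injective (weightedScale d) := fun v w h => by
  rw [weightedScale, weightedScale, Prod.mk.injEq] at h
  exact Prod.ext (mul_left_cancel₀ (pow_ne_zero 4 hd) h.1)
    (mul_left_cancel₀ (pow_ne_zero 6 hd) h.2)

lemma not_condM_zero : ¬ CondM 0 0 := fun h => h 2 Nat.prime_two (dvd_zero _) (dvd_zero _)

lemma dvd_of_weightedScale_eq {v w : ℤ × ℤ} {d e : ℕ} (hd : d ≠ 0) (hw : CondM w.1 w.2)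
    (h : weightedScale (d : ℤ) v = weightedScale (e : ℤ) w) : d ∣ e := by
  obtain ⟨g, d', e', hg, hcoprime, rfl, rfl⟩ :=
    Nat.exists_coprime' (Nat.gcd_pos_of_pos_left e (Nat.pos_of_ne_zero hd))
  have hreduced : weightedScale (d' : ℤ) v = weightedScale (e' : ℤ) w := by
    apply weightedScale_injective (Nat.cast_ne_zero.mpr hg.ne')
    rw [← weightedScale_mul, ← weightedScale_mul]
    simpa [mul_comm] using h
  rw [weightedScale, weightedScale, Prod.mk.injEq] at hreduced
  suffices d' = 1 by simp [this]
  by_contra hd'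
  obtain ⟨q, hq, hqd⟩ := Nat.exists_prime_and_dvd hd'
  have hqd' : (q : ℤ) ∣ d' := Int.natCast_dvd_natCast.mpr hqd
  have hqe : IsCoprime (q : ℤ) e' := Nat.isCoprime_iff_coprime.mpr (hcoprime.coprime_dvd_left hqd)
  refine hw q hq ((hqe.pow (n := 4)).dvd_of_dvd_mul_left ?_)
    ((hqe.pow (n := 6)).dvd_of_dvd_mul_left ?_)
  · exact hreduced.1 ▸ (pow_dvd_pow_of_dvd hqd' 4).mul_right _
  · exact hreduced.2 ▸ (pow_dvd_pow_of_dvd hqd' 6).mul_right _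

lemma le_of_weightedScale_eq {v w : ℤ × ℤ} {d : ℕ} (hv : v ≠ 0)
    (h : weightedScale (d : ℤ) w = v) : d ≤ v.1.natAbs + v.2.natAbs := by
  have hdvd1 : (d : ℤ) ∣ v.1 := h ▸ (dvd_pow_self _ four_ne_zero).mul_right _
  have hdvd2 : (d : ℤ) ∣ v.2 := h ▸ (dvd_pow_self _ (by decide : 6 ≠ 0)).mul_right _
  by_cases hv1 : v.1 = 0
  · have hv2 : v.2 ≠ 0 := fun hv2 => hv (Prod.ext hv1 hv2)
    exact (Int.natAbs_le_of_dvd_ne_zero hdvd2 hv2).trans (Nat.le_add_left _ _)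
  · exact (Int.natAbs_le_of_dvd_ne_zero hdvd1 hv1).trans (Nat.le_add_right _ _)

lemma exists_condM_weightedScale_eq {v : ℤ × ℤ} (hv : v ≠ 0) :
    ∃ d : ℕ, d ≠ 0 ∧ ∃ w : ℤ × ℤ, CondM w.1 w.2 ∧ weightedScale (d : ℤ) w = v := by
  let S : Set ℕ := {d | d ≠ 0 ∧ ∃ w, weightedScale (d : ℤ) w = v}
  have hone : 1 ∈ S := ⟨one_ne_zero, v, by simp [weightedScale]⟩
  have hbdd : BddAbove S := ⟨_, fun d ⟨_, _, hw⟩ => le_of_weightedScale_eq hv hw⟩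
  obtain ⟨hd, w, hw⟩ : sSup S ∈ S := Nat.sSup_mem ⟨1, hone⟩ hbdd
  refine ⟨sSup S, hd, w, fun q hq ⟨a, ha⟩ ⟨b, hb⟩ => ?_, hw⟩
  have hmem : sSup S * q ∈ S := by
    refine ⟨mul_ne_zero hd hq.ne_zero, (a, b), ?_⟩
    rw [← hw, Nat.cast_mul, weightedScale_mul]
    exact congrArg _ (Prod.ext ha.symm hb.symm)
  exact (le_csSup hbdd hmem).not_gt (lt_mul_of_one_lt_right (Nat.pos_of_ne_zero hd) hq.one_lt)

open Classical in
/-- The pairs of height at most `X` satisfying condition (M), singular equations included. -/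
noncomputable def primitiveBox (X : ℝ) : Finset (ℤ × ℤ) :=
  (heightBox X).filter fun v => CondM v.1 v.2

variable {X : ℝ}

lemma mem_primitiveBox_iff {v : ℤ × ℤ} :
    v ∈ primitiveBox X ↔ v ∈ heightBox X ∧ CondM v.1 v.2 := by
  classical exact Finset.mem_filter

lemma weightedScale_mem_heightBox_iff (hX : 0 ≤ X) {d : ℕ} (hd : d ≠ 0) {v : ℤ × ℤ} :
    weightedScale (d : ℤ) v ∈ heightBox X ↔ v ∈ heightBox (X / d ^ 12) := by
  have hd0 : (0 : ℝ) < d ^ 12 := by positivity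
  rw [mem_heightBox_iff hX, mem_heightBox_iff (by positivity), le_div_iff₀ hd0, le_div_iff₀ hd0]
  simp only [weightedScale, Int.cast_mul, Int.cast_pow, Int.cast_natCast, abs_mul, abs_pow,
    Nat.abs_cast, mul_pow, ← pow_mul, mul_comm, Nat.reduceMul]

lemma one_le_of_mem_primitiveBox (hX : 0 ≤ X) {v : ℤ × ℤ} (hv : v ∈ primitiveBox X) : 1 ≤ X := by
  rw [mem_primitiveBox_iff, mem_heightBox_iff hX] at hv
  obtain ⟨⟨hv1, hv2⟩, hM⟩ := hv
  by_cases h1 : v.1 = 0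
  · have h2 : v.2 ≠ 0 := fun h2 => not_condM_zero (by rwa [h1, h2] at hM)
    refine le_trans ?_ hv2
    exact_mod_cast Int.add_one_le_of_lt (sq_pos_of_ne_zero h2)
  · refine le_trans (one_le_pow₀ ?_) hv1
    exact_mod_cast Int.one_le_abs h1

lemma le_of_mem_primitiveBox_div (hX : 0 ≤ X) {d : ℕ} (hd : d ≠ 0) {w : ℤ × ℤ}
    (hw : w ∈ primitiveBox (X / d ^ 12)) : (d : ℝ) ≤ X := by
  have hd1 : (1 : ℝ) ≤ d := Nat.one_le_cast.mpr (Nat.one_le_iff_ne_zero.mpr hd)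
  have hdX : (d : ℝ) ^ 12 ≤ X := by
    simpa [le_div_iff₀ (pow_pos (zero_lt_one.trans_le hd1) 12)] using
      one_le_of_mem_primitiveBox (by positivity) hw
  exact (le_self_pow₀ hd1 (by decide)).trans hdX

lemma sum_heightBox_eq_sum_primitiveBox (hX : 0 ≤ X) {D : ℕ} (hD : X ≤ D) {g : ℤ × ℤ → ℝ}
    (h0 : g 0 = 0) :
    ∑ v ∈ heightBox X, g v
      = ∑ d ∈ Finset.Icc 1 D, ∑ w ∈ primitiveBox (X / d ^ 12), g (weightedScale (d : ℤ) w) := by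
  rw [Finset.sum_sigma',
    ← Finset.sum_filter_of_ne (p := (· ≠ 0)) fun v _ hv => ne_of_apply_ne g (h0 ▸ hv)]
  symm
  refine Finset.sum_bij (fun x _ => weightedScale (x.1 : ℤ) x.2) ?_ ?_ ?_ fun _ _ => rfl
  · rintro ⟨d, w⟩ h
    simp only [Finset.mem_sigma, Finset.mem_Icc, mem_primitiveBox_iff, Finset.mem_filter] at h ⊢
    obtain ⟨⟨hd, -⟩, hw, hM⟩ := h
    have hd0 : d ≠ 0 := Nat.one_le_iff_ne_zero.mp hd
    refine ⟨(weightedScale_mem_heightBox_iff hX hd0).mpr hw, fun hzero => ?_⟩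
    have hw0 : w = 0 := weightedScale_injective (Nat.cast_ne_zero.mpr hd0)
      (hzero.trans (Prod.ext (mul_zero _) (mul_zero _)).symm)
    exact not_condM_zero (by rwa [hw0] at hM)
  · rintro ⟨d, v⟩ hv ⟨e, w⟩ hw (heq : weightedScale (d : ℤ) v = weightedScale (e : ℤ) w)
    simp only [Finset.mem_sigma, Finset.mem_Icc, mem_primitiveBox_iff] at hv hw
    have hd0 : d ≠ 0 := Nat.one_le_iff_ne_zero.mp hv.1.1
    obtain rfl : d = e := Nat.dvd_antisymm (dvd_of_weightedScale_eq hd0 hw.2.2 heq)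
      (dvd_of_weightedScale_eq (Nat.one_le_iff_ne_zero.mp hw.1.1) hv.2.2 heq.symm)
    rw [weightedScale_injective (Nat.cast_ne_zero.mpr hd0) heq]
  · intro v hv
    rw [Finset.mem_filter] at hv
    obtain ⟨d, hd, w, hM, rfl⟩ := exists_condM_weightedScale_eq hv.2
    have hw : w ∈ primitiveBox (X / d ^ 12) :=
      mem_primitiveBox_iff.mpr ⟨(weightedScale_mem_heightBox_iff hX hd).mp hv.1, hM⟩
    have hdD : d ≤ D := Nat.cast_le.mp ((le_of_mem_primitiveBox_div hX hd hw).trans hD)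
    exact ⟨⟨d, w⟩, Finset.mem_sigma.mpr
      ⟨Finset.mem_Icc.mpr ⟨Nat.one_le_iff_ne_zero.mpr hd, hdD⟩, hw⟩, rfl⟩

lemma sum_primitiveBox_eq_sum_heightBox_sub (hX : 0 ≤ X) {D : ℕ} (hD1 : 1 ≤ D) (hD : X ≤ D)
    {g : ℤ × ℤ → ℝ} (h0 : g 0 = 0) :
    ∑ v ∈ primitiveBox X, g v = ∑ v ∈ heightBox X, g v
      - ∑ d ∈ Finset.Ioc 1 D, ∑ w ∈ primitiveBox (X / d ^ 12), g (weightedScale (d : ℤ) w) := by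
  rw [sum_heightBox_eq_sum_primitiveBox hX hD h0, ← Finset.sum_Ioc_add_eq_sum_Icc hD1,
    add_sub_cancel_left]
  simp [weightedScale]

lemma sum_Ioc_one_inv_pow_six_le (D : ℕ) (hD : 1 ≤ D) :
    ∑ d ∈ Finset.Ioc 1 D, ((d : ℝ) ^ 6)⁻¹ ≤ 1 / 2 := by
  have hterm (d : ℕ) (hd : d ∈ Finset.Ioc 1 D) :
      ((d : ℝ) ^ 6)⁻¹ ≤ 1 / 2 * ((d : ℝ) ^ 2)⁻¹ := by
    have hd2 : (2 : ℝ) ≤ d := Nat.ofNat_le_cast.mpr (Finset.mem_Ioc.mp hd).1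
    have hd4 : (2 : ℝ) ≤ (d : ℝ) ^ 4 := hd2.trans (le_self_pow₀ (by linarith) four_ne_zero)
    rw [show (d : ℝ) ^ 6 = d ^ 4 * d ^ 2 by ring, mul_inv, one_div]
    gcongr
  calc ∑ d ∈ Finset.Ioc 1 D, ((d : ℝ) ^ 6)⁻¹
      ≤ 1 / 2 * ∑ d ∈ Finset.Ioc 1 D, ((d : ℝ) ^ 2)⁻¹ := by
        rw [Finset.mul_sum]
        exact Finset.sum_le_sum hterm
    _ ≤ 1 / 2 * 1 := by
        have := sum_Ioc_inv_sq_le_sub (α := ℝ) one_ne_zero hD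
        have hD0 : (0 : ℝ) ≤ (D : ℝ)⁻¹ := by positivity
        gcongr
        simp only [Nat.cast_one, inv_one] at this
        linarith
    _ = 1 / 2 := mul_one _

lemma abs_sum_Ioc_one_le {T : ℕ → ℝ} {B : ℝ} (hB : 0 ≤ B) {D : ℕ} (hD : 1 ≤ D)
    (hT : ∀ d ∈ Finset.Ioc 1 D, |T d| ≤ B * ((d : ℝ) ^ 6)⁻¹) :
    |∑ d ∈ Finset.Ioc 1 D, T d| ≤ B * (1 / 2) :=
  calc |∑ d ∈ Finset.Ioc 1 D, T d|
      ≤ ∑ d ∈ Finset.Ioc 1 D, B * ((d : ℝ) ^ 6)⁻¹ :=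
        (Finset.abs_sum_le_sum_abs _ _).trans (Finset.sum_le_sum hT)
    _ ≤ B * (1 / 2) := by
        rw [← Finset.mul_sum]
        gcongr
        exact sum_Ioc_one_inv_pow_six_le D hD

lemma sqrt_div_pow_twelve (X : ℝ) (d : ℕ) : √(X / d ^ 12) = √X * ((d : ℝ) ^ 6)⁻¹ := by
  rw [Real.sqrt_div' _ (by positivity), show (d : ℝ) ^ 12 = (d ^ 6) ^ 2 by ring,
    Real.sqrt_sq (by positivity), div_eq_mul_inv]

lemma IsScaleInvariant.apply_zero {R : Type*} [CommRing R] [Fintype R] {g : R × R → ℝ}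
    (hg : IsScaleInvariant g) (hsum : ∑ v, g v = 0) : g 0 = 0 := by
  by_cases hunit : IsUnit (0 : R)
  · have := subsingleton_of_zero_eq_one (isUnit_zero_iff.mp hunit)
    rwa [Fintype.sum_subsingleton _ 0] at hsum
  · simpa [weightedScale, Prod.mk_zero_zero] using (hg 0 0).2 hunit

variable {P : ℕ} {g : ZMod P × ZMod P → ℝ}

lemma abs_sum_primitiveBox_weightedScale_le (hg : IsScaleInvariant g) (d : ℕ) {B : ℝ}
    (hB : |∑ v ∈ primitiveBox X, g (castPair _ v)| ≤ B) :
    |∑ v ∈ primitiveBox X, g (castPair _ (weightedScale (d : ℤ) v))| ≤ B := by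
  simp only [castPair_weightedScale]
  by_cases hunit : IsUnit (d : ZMod P)
  · simpa only [(hg _ _).1 hunit] using hB
  · simpa only [(hg _ _).2 hunit, Finset.sum_const_zero, abs_zero] using
      (abs_nonneg _).trans hB

variable [NeZero P] {K : ℝ}

/- Writing every nonzero pair as a weighted scaling by `d` of a primitive one, the terms `d ≥ 2`
contribute at most half of the bound, since the heights involved are at most `X / d ^ 12`. -/
lemma abs_sum_primitiveBox_le (hK : ∀ v, |g v| ≤ K) (hsum : ∑ v, g v = 0)
    (hg : IsScaleInvariant g) (hX : 0 ≤ X) :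
    |∑ v ∈ primitiveBox X, g (castPair _ v)| ≤ 12 * K * P * √X := by
  have hK0 : 0 ≤ K := (abs_nonneg _).trans (hK 0)
  obtain ⟨n, hn⟩ := pow_unbounded_of_one_lt X one_lt_two
  induction n generalizing X with
  | zero =>
    have hempty : primitiveBox X = ∅ := Finset.eq_empty_of_forall_notMem fun v hv =>
      (one_le_of_mem_primitiveBox hX hv).not_gt (by simpa using hn)
    simp only [hempty, Finset.sum_empty, abs_zero]
    positivity
  | succ n ih =>
    rcases lt_or_ge X 1 with hX1 | hX1
    · exact ih hX (hX1.trans_le (one_le_pow₀ one_le_two))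
    let T (d : ℕ) := ∑ w ∈ primitiveBox (X / d ^ 12), g (castPair _ (weightedScale (d : ℤ) w))
    have hscaled (d : ℕ) (hd : d ∈ Finset.Ioc 1 (2 ^ (n + 1))) :
        |T d| ≤ 12 * K * P * √X * ((d : ℝ) ^ 6)⁻¹ := by
      have hd2 : (2 : ℝ) ≤ d := Nat.ofNat_le_cast.mpr (Finset.mem_Ioc.mp hd).1
      have hlt : X / d ^ 12 < 2 ^ n := by
        rw [div_lt_iff₀ (by positivity)]
        refine hn.trans_le ?_
        rw [pow_succ]
        gcongr
        exact hd2.trans (le_self_pow₀ (by linarith) (by decide))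
      refine (abs_sum_primitiveBox_weightedScale_le hg d (ih (by positivity) hlt)).trans_eq ?_
      rw [sqrt_div_pow_twelve]
      ring
    have htail := abs_sum_Ioc_one_le (by positivity) Nat.one_le_two_pow hscaled
    rw [sum_primitiveBox_eq_sum_heightBox_sub (g := fun v => g (castPair _ v)) hX
      Nat.one_le_two_pow (by exact_mod_cast hn.le)
      (by simpa [castPair, Prod.mk_zero_zero] using hg.apply_zero hsum)]
    refine (abs_sub _ _).trans ?_
    linarith [abs_sum_heightBox_le hK hsum hX1]

end Primitive

section Family

open Classical in
/-- The family `E(X)` as a finset. -/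
noncomputable def familyFinset (X : ℝ) : Finset (ℤ × ℤ) :=
  (primitiveBox X).filter fun v => 4 * v.1 ^ 3 + 27 * v.2 ^ 2 ≠ 0

variable {X : ℝ}

lemma coe_familyFinset (hX : 0 ≤ X) : (familyFinset X : Set (ℤ × ℤ)) = Efam X := by
  ext v
  simp only [familyFinset, Finset.coe_filter, mem_primitiveBox_iff, mem_heightBox_iff hX, Efam,
    Set.mem_ofPred_eq, Int.cast_max, max_le_iff, Int.cast_pow, Int.cast_abs]
  tauto

lemma familyFinset_subset_heightBox : familyFinset X ⊆ heightBox X :=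
  fun _ hv => (mem_primitiveBox_iff.mp (Finset.mem_filter.mp hv).1).1

open Classical in
lemma card_singular_heightBox_le (hX : 1 ≤ X) :
    (((heightBox X).filter fun v => 4 * v.1 ^ 3 + 27 * v.2 ^ 2 = 0).card : ℝ) ≤ 3 * √X := by
  have hsqrt : 1 ≤ √X := Real.one_le_sqrt.mpr hX
  have hM : (⌊√X⌋₊ : ℝ) ≤ √X := Nat.floor_le (by positivity)
  have hinj : ((heightBox X).filter fun v => 4 * v.1 ^ 3 + 27 * v.2 ^ 2 = 0).card
      ≤ (Finset.Icc (-⌊√X⌋₊ : ℤ) ⌊√X⌋₊).card := by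
    refine Finset.card_le_card_of_injOn Prod.snd (fun v hv => ?_) fun v hv w hw hvw => ?_
    · rw [Finset.mem_coe, Finset.mem_filter, heightBox, Finset.mem_product] at hv
      exact hv.1.2
    · have hv0 := (Finset.mem_filter.mp hv).2
      have hw0 := (Finset.mem_filter.mp hw).2
      rw [← hvw] at hw0
      have hcube : v.1 ^ 3 = w.1 ^ 3 := by linarith
      exact Prod.ext ((Odd.strictMono_pow (by decide)).injective hcube) hvw
  calc _ ≤ ((Finset.Icc (-⌊√X⌋₊ : ℤ) ⌊√X⌋₊).card : ℝ) := Nat.cast_le.mpr hinj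
    _ ≤ 3 * √X := by
        rw [card_Icc_neg]
        linarith

variable {P : ℕ} [NeZero P] {g : ZMod P × ZMod P → ℝ} {K : ℝ}

lemma abs_sum_familyFinset_le (hK : ∀ v, |g v| ≤ K) (hsum : ∑ v, g v = 0)
    (hg : IsScaleInvariant g) (hX : 1 ≤ X) :
    |∑ v ∈ familyFinset X, g (castPair _ v)| ≤ 15 * K * P * √X := by
  classical
  have hK0 : 0 ≤ K := (abs_nonneg _).trans (hK 0)
  have hP : (1 : ℝ) ≤ P := Nat.one_le_cast.mpr NeZero.one_le
  set S := (primitiveBox X).filter fun v => ¬ 4 * v.1 ^ 3 + 27 * v.2 ^ 2 ≠ 0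
  have hS : S ⊆ (heightBox X).filter fun v => 4 * v.1 ^ 3 + 27 * v.2 ^ 2 = 0 := fun v hv => by
    simp only [S, mem_primitiveBox_iff, Finset.mem_filter, not_not] at hv ⊢
    exact ⟨hv.1.1, hv.2⟩
  have hsingular : |∑ v ∈ S, g (castPair _ v)| ≤ 3 * K * P * √X :=
    calc |∑ v ∈ S, g (castPair _ v)| ≤ S.card * K := by
          rw [← nsmul_eq_mul]
          exact (Finset.abs_sum_le_sum_abs _ _).trans
            (Finset.sum_le_card_nsmul _ _ _ fun v _ => hK _)
      _ ≤ 3 * √X * K * P := by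
          rw [← mul_one (S.card * K : ℝ)]
          gcongr
          exact (Nat.cast_le.mpr (Finset.card_le_card hS)).trans (card_singular_heightBox_le hX)
      _ = 3 * K * P * √X := by ring
  have hsplit := Finset.sum_filter_add_sum_filter_not (primitiveBox X)
    (fun v => 4 * v.1 ^ 3 + 27 * v.2 ^ 2 ≠ 0) fun v => g (castPair _ v)
  rw [familyFinset, eq_sub_of_add_eq hsplit]
  refine (abs_sub _ _).trans ?_
  linarith [abs_sum_primitiveBox_le hK hsum hg (zero_le_one.trans hX)]

end Family

section ChineseRemainder

variable {ι : Type*} [Fintype ι]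

lemma sum_prod_eval_pair {S : ι → Type*} [∀ i, Fintype (S i)] [DecidableEq ι]
    (g : ∀ i, S i × S i → ℝ) :
    ∑ v : (∀ i, S i) × (∀ i, S i), ∏ i, g i (v.1 i, v.2 i) = ∏ i, ∑ w, g i w := by
  simp only [Fintype.sum_prod_type, Fintype.prod_sum]

variable {p : ι → ℕ} [hp : ∀ i, Fact (p i).Prime] {X : ℝ}

lemma abs_sum_familyFinset_pi_le [DecidableEq ι] (hinj : Function.Injective p)
    {g : (∀ i, ZMod (p i)) × (∀ i, ZMod (p i)) → ℝ} {K : ℝ} (hK : ∀ v, |g v| ≤ K)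
    (hsum : ∑ v, g v = 0) (hg : IsScaleInvariant g) (hX : 1 ≤ X) :
    |∑ v ∈ familyFinset X, g (castPair _ v)| ≤ 15 * K * (∏ i, (p i : ℝ)) * √X := by
  have hcoprime : Pairwise (Function.onFun Nat.Coprime p) := fun i j hij =>
    (Nat.coprime_primes (hp i).out (hp j).out).mpr (hinj.ne hij)
  have : NeZero (∏ i, p i) := ⟨Finset.prod_ne_zero_iff.mpr fun i _ => (hp i).out.ne_zero⟩
  let φ := ZMod.prodEquivPi p hcoprime
  have hsum' : ∑ v : ZMod (∏ i, p i) × ZMod (∏ i, p i), g (φ v.1, φ v.2) = 0 :=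
    ((φ.toEquiv.prodCongr φ.toEquiv).sum_comp g).trans hsum
  have hbound := abs_sum_familyFinset_le (fun v => hK _) hsum' (hg.comp_ringEquiv φ) hX
  simpa only [castPair, map_intCast, Nat.cast_prod] using hbound

end ChineseRemainder

section EvenModel

variable {F : Type*} [Field F] [Fintype F] [DecidableEq F]

/-- The mean of `frobCoeff e ^ r` over the nonzero pairs of coefficients in `F`. -/
noncomputable def frobMean (F : Type*) [Field F] [Fintype F] [DecidableEq F] (e r : ℕ) : ℝ :=
  (∑ v : F × F, frobCoeff e v ^ r) / ((Fintype.card F : ℝ) ^ 2 - 1)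

/-- The scale-invariant function that is constant off the origin and has the same mean as
`frobCoeff e ^ r`. -/
noncomputable def frobModel (e r : ℕ) (v : F × F) : ℝ :=
  if v = 0 then 0 else frobMean F e r

lemma isScaleInvariant_frobModel (e r : ℕ) : IsScaleInvariant (frobModel e r : F × F → ℝ) :=
  isScaleInvariant_of_field (if_pos rfl) fun d hd v => by
    simp [frobModel, weightedScale, Prod.ext_iff, hd]

lemma sum_frobModel (e r : ℕ) : ∑ v : F × F, frobModel e r v = ∑ v : F × F, frobCoeff e v ^ r := by
  have hq : (1 : ℝ) < Fintype.card F := Nat.one_lt_cast.mpr Fintype.one_lt_card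
  have hne : (Fintype.card F : ℝ) ^ 2 - 1 ≠ 0 := by nlinarith
  have hsplit (v : F × F) :
      frobModel e r v = frobMean F e r - if v = 0 then frobMean F e r else 0 := by
    rw [frobModel]
    split_ifs <;> simp
  simp only [hsplit, Finset.sum_sub_distrib, Finset.sum_const, Finset.card_univ,
    Fintype.card_prod, nsmul_eq_mul, Nat.cast_mul, Finset.sum_ite_eq', Finset.mem_univ, if_true]
  rw [← sub_one_mul, ← sq, frobMean, mul_div_cancel₀ _ hne]

lemma abs_evenMean (e : ℕ) : |evenMean e| = 1 := by
  rw [evenMean]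
  split_ifs <;> simp

variable {e r : ℕ}

lemma abs_frobMean_sub_evenMean_le (hF : ringChar F ≠ 2) (h3 : (3 : F) ≠ 0)
    (her : (e = 1 ∧ r = 2) ∨ (e = 2 ∧ r = 1)) :
    |frobMean F e r - evenMean e| ≤ 4 / Fintype.card F := by
  have hq : (2 : ℝ) ≤ Fintype.card F := Nat.ofNat_le_cast.mpr Fintype.one_lt_card
  have hpos : 0 < (Fintype.card F : ℝ) ^ 2 - 1 := by nlinarith
  have hdiv : frobMean F e r - evenMean e
      = ((∑ v : F × F, frobCoeff e v ^ r) - evenMean e * ((Fintype.card F : ℝ) ^ 2 - 1))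
        / ((Fintype.card F : ℝ) ^ 2 - 1) := by
    rw [frobMean, sub_div, mul_div_cancel_right₀ _ hpos.ne']
  rw [hdiv, abs_div, abs_of_pos hpos, div_le_div_iff₀ hpos (by positivity)]
  nlinarith [abs_sum_frobCoeff_pow_sub_le hF h3 her]

lemma abs_frobModel_le (hF : ringChar F ≠ 2) (h3 : (3 : F) ≠ 0)
    (her : (e = 1 ∧ r = 2) ∨ (e = 2 ∧ r = 1)) (v : F × F) : |frobModel e r v| ≤ 3 := by
  have hq : (2 : ℝ) ≤ Fintype.card F := Nat.ofNat_le_cast.mpr Fintype.one_lt_card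
  have hmean : |frobMean F e r| - |evenMean e| ≤ 4 / Fintype.card F :=
    (abs_sub_abs_le_abs_sub _ _).trans (abs_frobMean_sub_evenMean_le hF h3 her)
  have hdiv : 4 / (Fintype.card F : ℝ) ≤ 2 := by
    rw [div_le_iff₀ (by positivity)]
    linarith
  rw [abs_evenMean] at hmean
  rw [frobModel]
  split_ifs
  · simp
  · linarith

lemma abs_frobModel_sub_evenMean_le (hF : ringChar F ≠ 2) (h3 : (3 : F) ≠ 0)
    (her : (e = 1 ∧ r = 2) ∨ (e = 2 ∧ r = 1)) (v : F × F) :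
    |frobModel e r v - evenMean e| ≤ 4 / Fintype.card F + if v = 0 then 1 else 0 := by
  rw [frobModel]
  split_ifs
  · rw [zero_sub, abs_neg, abs_evenMean]
    linarith [show (0 : ℝ) ≤ 4 / Fintype.card F by positivity]
  · rw [add_zero]
    exact abs_frobMean_sub_evenMean_le hF h3 her

end EvenModel

section Moments

lemma abs_prod_sub_prod_le {ι : Type*} (s : Finset ι) {u v : ι → ℝ} {M : ℝ} (hM : 1 ≤ M)
    (hu : ∀ i, |u i| ≤ M) (hv : ∀ i, |v i| ≤ 1) :
    |∏ i ∈ s, u i - ∏ i ∈ s, v i| ≤ M ^ s.card * ∑ i ∈ s, |u i - v i| := by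
  classical
  induction s using Finset.induction_on with
  | empty => simp
  | insert a s ha ih =>
    have hprod : |∏ i ∈ s, v i| ≤ 1 := by
      rw [Finset.abs_prod]
      exact Finset.prod_le_one (fun _ _ => abs_nonneg _) fun i _ => hv i
    rw [Finset.prod_insert ha, Finset.prod_insert ha, Finset.sum_insert ha,
      Finset.card_insert_of_notMem ha]
    calc |u a * ∏ i ∈ s, u i - v a * ∏ i ∈ s, v i|
        = |u a * (∏ i ∈ s, u i - ∏ i ∈ s, v i) + (u a - v a) * ∏ i ∈ s, v i| := by ring_nf
      _ ≤ |u a| * |∏ i ∈ s, u i - ∏ i ∈ s, v i| + |u a - v a| * |∏ i ∈ s, v i| := by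
          rw [← abs_mul, ← abs_mul]
          exact abs_add_le _ _
      _ ≤ M * (M ^ s.card * ∑ i ∈ s, |u i - v i|) + |u a - v a| * M ^ (s.card + 1) := by
          gcongr
          · exact hu a
          · exact hprod.trans (one_le_pow₀ hM)
      _ = M ^ (s.card + 1) * (|u a - v a| + ∑ i ∈ s, |u i - v i|) := by ring

lemma ringChar_zmod_ne_two {n : ℕ} (hn : n ≠ 2) : ringChar (ZMod n) ≠ 2 := by
  rwa [ZMod.ringChar_zmod_n]

lemma three_ne_zero_zmod {n : ℕ} (hn : 3 < n) : (3 : ZMod n) ≠ 0 := by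
  have hdvd : ¬ n ∣ 3 := Nat.not_dvd_of_pos_of_lt three_pos hn
  rwa [← ZMod.natCast_eq_zero_iff, Nat.cast_ofNat] at hdvd

variable {ι : Type*} [Fintype ι] {p : ι → ℕ} [hp : ∀ i, Fact (p i).Prime] {e r : ι → ℕ} {X : ℝ}

theorem abs_sum_prod_frobCoeff_le (hinj : Function.Injective p) (hp2 : ∀ i, p i ≠ 2)
    (hr : ∀ i, r i ≠ 0) (hodd : ∃ j, e j = 1 ∧ Odd (r j)) (hX : 1 ≤ X) :
    |∑ v ∈ familyFinset X, ∏ i, frobCoeff (e i) (castPair (ZMod (p i)) v) ^ r i|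
      ≤ 15 * (∏ i, (45 ^ 2 : ℝ) ^ r i) * (∏ i, (p i : ℝ)) * √X := by
  classical
  obtain ⟨j, hej, hrj⟩ := hodd
  refine abs_sum_familyFinset_pi_le hinj
    (g := fun v => ∏ i, frobCoeff (e i) (v.1 i, v.2 i) ^ r i) (fun v => ?_) ?_
    (.prod_pi fun i => isScaleInvariant_frobCoeff_pow (ringChar_zmod_ne_two (hp2 i)) (e i) (hr i))
    hX
  · simp only [Finset.abs_prod, abs_pow]
    gcongr with i
    exact abs_frobCoeff_le (hp2 i) _ _
  · rw [sum_prod_eval_pair fun i v => frobCoeff (e i) v ^ r i]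
    refine Finset.prod_eq_zero (Finset.mem_univ j) ?_
    rw [hej, sum_frobCoeff_one_pow_eq_zero (ringChar_zmod_ne_two (hp2 j)) hrj]

lemma abs_sum_prod_frobCoeff_sub_prod_frobModel_le (hinj : Function.Injective p)
    (hp3 : ∀ i, 3 < p i) (her : ∀ i, (e i = 1 ∧ r i = 2) ∨ (e i = 2 ∧ r i = 1)) (hX : 1 ≤ X) :
    |∑ v ∈ familyFinset X, (∏ i, frobCoeff (e i) (castPair (ZMod (p i)) v) ^ r i
        - ∏ i, frobModel (e i) (r i) (castPair (ZMod (p i)) v))|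
      ≤ 15 * (∏ i, (45 ^ 2 : ℝ) ^ r i + 3 ^ Fintype.card ι) * (∏ i, (p i : ℝ)) * √X := by
  classical
  have hp2 (i : ι) : p i ≠ 2 := ((Nat.lt_succ_self 2).trans (hp3 i)).ne'
  have hr (i : ι) : r i ≠ 0 := by rcases her i with h | h <;> lia
  have hF (i : ι) : ringChar (ZMod (p i)) ≠ 2 := ringChar_zmod_ne_two (hp2 i)
  refine abs_sum_familyFinset_pi_le hinj
    (g := fun v => ∏ i, frobCoeff (e i) (v.1 i, v.2 i) ^ r i
      - ∏ i, frobModel (e i) (r i) (v.1 i, v.2 i)) (fun v => ?_) ?_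
    (.sub (.prod_pi fun i => isScaleInvariant_frobCoeff_pow (hF i) (e i) (hr i))
      (.prod_pi fun i => isScaleInvariant_frobModel (e i) (r i))) hX
  · refine (abs_sub _ _).trans (add_le_add ?_ ?_)
    · simp only [Finset.abs_prod, abs_pow]
      gcongr with i
      exact abs_frobCoeff_le (hp2 i) _ _
    · rw [Finset.abs_prod]
      exact (Finset.prod_le_prod (fun _ _ => abs_nonneg _) fun i _ =>
        abs_frobModel_le (hF i) (three_ne_zero_zmod (hp3 i)) (her i) _).trans_eq (by simp)
  · rw [Finset.sum_sub_distrib, sum_prod_eval_pair fun i v => frobCoeff (e i) v ^ r i,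
      sum_prod_eval_pair fun i v => frobModel (e i) (r i) v]
    simp only [sum_frobModel, sub_self]

lemma abs_prod_frobModel_sub_prod_evenMean_le (hp3 : ∀ i, 3 < p i)
    (her : ∀ i, (e i = 1 ∧ r i = 2) ∨ (e i = 2 ∧ r i = 1)) (v : ∀ i, ZMod (p i) × ZMod (p i)) :
    |∏ i, frobModel (e i) (r i) (v i) - ∏ i, evenMean (e i)|
      ≤ 3 ^ Fintype.card ι * ∑ i, (4 / (p i : ℝ) + if v i = 0 then 1 else 0) := by
  have hF (i : ι) : ringChar (ZMod (p i)) ≠ 2 :=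
    ringChar_zmod_ne_two ((Nat.lt_succ_self 2).trans (hp3 i)).ne'
  have h3 (i : ι) : (3 : ZMod (p i)) ≠ 0 := three_ne_zero_zmod (hp3 i)
  refine (abs_prod_sub_prod_le Finset.univ (M := 3) (by norm_num)
    (fun i => abs_frobModel_le (hF i) (h3 i) (her i) _) fun i => (abs_evenMean _).le).trans ?_
  rw [Finset.card_univ]
  gcongr with i
  simpa only [ZMod.card] using abs_frobModel_sub_evenMean_le (hF i) (h3 i) (her i) (v i)

lemma sum_heightBox_inv_add_indicator_le (hX : 1 ≤ X) (q : ℕ) [NeZero q] :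
    ∑ v ∈ heightBox X, (4 / (q : ℝ) + if castPair (ZMod q) v = 0 then 1 else 0)
      ≤ 45 * (1 / q * X ^ (5 / 6 : ℝ)) + 9 * √X := by
  have hcard : (heightBox X).card * (4 / (q : ℝ)) ≤ 9 * X ^ (5 / 6 : ℝ) * (4 / q) := by
    gcongr
    exact card_heightBox_le hX
  rw [Finset.sum_add_distrib, Finset.sum_const, nsmul_eq_mul, Finset.sum_boole]
  calc _ ≤ 9 * X ^ (5 / 6 : ℝ) * (4 / q) + 9 * (X ^ (5 / 6 : ℝ) / q + √X) :=
        add_le_add hcard (card_heightBox_filter_dvd_le hX q)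
    _ = 45 * (1 / q * X ^ (5 / 6 : ℝ)) + 9 * √X := by ring

lemma abs_sum_prod_frobModel_sub_prod_evenMean_le (hp3 : ∀ i, 3 < p i)
    (her : ∀ i, (e i = 1 ∧ r i = 2) ∨ (e i = 2 ∧ r i = 1)) (hX : 1 ≤ X) :
    |∑ v ∈ familyFinset X, (∏ i, frobModel (e i) (r i) (castPair (ZMod (p i)) v)
        - ∏ i, evenMean (e i))|
      ≤ 3 ^ Fintype.card ι * (45 * ((∑ i, 1 / (p i : ℝ)) * X ^ (5 / 6 : ℝ))
        + 9 * Fintype.card ι * √X) := by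
  have hnonneg (v : ℤ × ℤ) (i : ι) :
      0 ≤ 4 / (p i : ℝ) + if castPair (ZMod (p i)) v = 0 then 1 else 0 := by positivity
  calc _ ≤ ∑ v ∈ familyFinset X, 3 ^ Fintype.card ι *
            ∑ i, (4 / (p i : ℝ) + if castPair (ZMod (p i)) v = 0 then 1 else 0) :=
        (Finset.abs_sum_le_sum_abs _ _).trans <| Finset.sum_le_sum fun v _ =>
          abs_prod_frobModel_sub_prod_evenMean_le hp3 her fun i => castPair (ZMod (p i)) v
    _ ≤ ∑ v ∈ heightBox X, 3 ^ Fintype.card ι *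
            ∑ i, (4 / (p i : ℝ) + if castPair (ZMod (p i)) v = 0 then 1 else 0) :=
        Finset.sum_le_sum_of_subset_of_nonneg familyFinset_subset_heightBox fun v _ _ =>
          mul_nonneg (by positivity) (Finset.sum_nonneg fun i _ => hnonneg v i)
    _ ≤ 3 ^ Fintype.card ι * ∑ i, (45 * (1 / (p i : ℝ) * X ^ (5 / 6 : ℝ)) + 9 * √X) := by
        rw [← Finset.mul_sum, Finset.sum_comm]
        gcongr with i
        have : NeZero (p i) := ⟨(hp i).out.ne_zero⟩
        exact sum_heightBox_inv_add_indicator_le hX (p i)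
    _ = _ := by
        rw [Finset.sum_add_distrib, ← Finset.mul_sum, Finset.sum_mul, Finset.sum_const,
          Finset.card_univ, nsmul_eq_mul]
        ring

theorem abs_sum_prod_frobCoeff_sub_le (hinj : Function.Injective p) (hp3 : ∀ i, 3 < p i)
    (her : ∀ i, (e i = 1 ∧ r i = 2) ∨ (e i = 2 ∧ r i = 1)) (hX : 1 ≤ X) :
    |(∑ v ∈ familyFinset X, ∏ i, frobCoeff (e i) (castPair (ZMod (p i)) v) ^ r i)
        - (∏ i, evenMean (e i)) * ((familyFinset X).card : ℝ)|
      ≤ (15 * ∏ i, (45 ^ 2 : ℝ) ^ r i + (60 + 9 * Fintype.card ι) * 3 ^ Fintype.card ι)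
        * ((∏ i, (p i : ℝ)) * √X + (∑ i, 1 / (p i : ℝ)) * X ^ (5 / 6 : ℝ)) := by
  have hprod : 1 ≤ ∏ i, (p i : ℝ) :=
    Finset.one_le_prod fun i _ => Nat.one_le_cast.mpr (hp i).out.one_le
  have hsplit : (∑ v ∈ familyFinset X, ∏ i, frobCoeff (e i) (castPair (ZMod (p i)) v) ^ r i)
        - (∏ i, evenMean (e i)) * ((familyFinset X).card : ℝ)
      = ∑ v ∈ familyFinset X, (∏ i, frobCoeff (e i) (castPair (ZMod (p i)) v) ^ r i
          - ∏ i, frobModel (e i) (r i) (castPair (ZMod (p i)) v))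
        + ∑ v ∈ familyFinset X, (∏ i, frobModel (e i) (r i) (castPair (ZMod (p i)) v)
          - ∏ i, evenMean (e i)) := by
    simp only [Finset.sum_sub_distrib, Finset.sum_const, nsmul_eq_mul]
    ring
  rw [hsplit]
  refine (abs_add_le _ _).trans ((add_le_add
    (abs_sum_prod_frobCoeff_sub_prod_frobModel_le hinj hp3 her hX)
    (abs_sum_prod_frobModel_sub_prod_evenMean_le hp3 her hX)).trans ?_)
  set K := ∏ i, (45 ^ 2 : ℝ) ^ r i
  have : 0 ≤ K := by positivity
  set S := (∑ i, 1 / (p i : ℝ)) * X ^ (5 / 6 : ℝ)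
  have hS : 0 ≤ S := by positivity
  have hsqrt : √X ≤ (∏ i, (p i : ℝ)) * √X := le_mul_of_one_le_left (Real.sqrt_nonneg X) hprod
  set T := (∏ i, (p i : ℝ)) * √X
  set M : ℝ := 3 ^ Fintype.card ι
  calc 15 * (K + M) * (∏ i, (p i : ℝ)) * √X + M * (45 * S + 9 * Fintype.card ι * √X)
      = 15 * (K + M) * T + M * (45 * S + 9 * Fintype.card ι * √X) := by ring
    _ ≤ 15 * (K + M) * (T + S) + M * (45 * (T + S) + 9 * Fintype.card ι * (T + S)) := by
        have hT : 0 ≤ T := (Real.sqrt_nonneg X).trans hsqrt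
        gcongr <;> linarith
    _ = (15 * K + (60 + 9 * Fintype.card ι) * M) * (T + S) := by ring

end Moments

lemma prod_evenMean {ι : Type*} [Fintype ι] (e : ι → ℕ) :
    ∏ i, evenMean (e i) = (-1) ^ (Finset.univ.filter fun j => e j = 2).card := by
  simp only [evenMean, Finset.prod_ite, Finset.prod_const, one_pow, mul_one]

lemma finsum_Efam_prod_ahatPow {ι : Type*} [Fintype ι] {p : ι → ℕ} (hp : ∀ i, (p i).Prime)
    [∀ i, Fact (p i).Prime] (hp2 : ∀ i, p i ≠ 2) (e r : ι → ℕ) {X : ℝ} (hX : 0 ≤ X) :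
    ∑ᶠ AB ∈ Efam X, ∏ i, ahatPow (p i) (hp i) AB.1 AB.2 (e i) ^ r i
      = ∑ v ∈ familyFinset X, ∏ i, frobCoeff (e i) (castPair (ZMod (p i)) v) ^ r i := by
  rw [← coe_familyFinset hX, finsum_mem_coe_finset]
  simp only [ahatPow_eq_frobCoeff (hp _) (hp2 _)]

theorem stmt_18_general {ι : Type*} [Fintype ι] (e r : ι → ℕ)
    (her : ∀ i, (e i = 1 ∧ (Odd (r i) ∨ r i = 2)) ∨ (e i = 2 ∧ r i = 1)) :
    ∃ C : ℝ, 0 < C ∧ ∀ (X : ℝ), 1 ≤ X →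
      ∀ (p : ι → ℕ) (hp : ∀ i, (p i).Prime), (∀ i, 5 ≤ p i) → Function.Injective p →
      ((∃ j, e j = 1 ∧ Odd (r j)) →
        |∑ᶠ AB ∈ Efam X, ∏ i, ahatPow (p i) (hp i) AB.1 AB.2 (e i) ^ r i|
          ≤ C * (∏ i, (p i : ℝ)) * X ^ ((1 : ℝ) / 2))
      ∧ (¬ (∃ j, e j = 1 ∧ Odd (r j)) →
        |(∑ᶠ AB ∈ Efam X, ∏ i, ahatPow (p i) (hp i) AB.1 AB.2 (e i) ^ r i)
            - (-1 : ℝ) ^ (Finset.univ.filter (fun j => e j = 2)).card * ((Efam X).ncard : ℝ)|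
          ≤ C * ((∏ i, (p i : ℝ)) * X ^ ((1 : ℝ) / 2)
              + (∑ i, 1 / (p i : ℝ)) * X ^ ((5 : ℝ) / 6))) := by
  have hr (i : ι) : r i ≠ 0 := by
    rcases her i with ⟨_, hodd | htwo⟩ | ⟨_, hone⟩
    exacts [hodd.pos.ne', by lia, by lia]
  refine ⟨15 * ∏ i, (45 ^ 2 : ℝ) ^ r i + (60 + 9 * Fintype.card ι) * 3 ^ Fintype.card ι,
    by positivity, fun X hX p hp h5 hinj => ?_⟩
  have : ∀ i, Fact (p i).Prime := fun i => ⟨hp i⟩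
  have hp3 (i : ι) : 3 < p i := (by decide : 3 < 5).trans_le (h5 i)
  have hp2 (i : ι) : p i ≠ 2 := ((Nat.lt_succ_self 2).trans (hp3 i)).ne'
  have hX0 : 0 ≤ X := zero_le_one.trans hX
  rw [finsum_Efam_prod_ahatPow hp hp2 e r hX0, ← coe_familyFinset hX0, Set.ncard_coe_finset,
    ← Real.sqrt_eq_rpow, ← prod_evenMean]
  refine ⟨fun hodd => (abs_sum_prod_frobCoeff_le hinj hp2 hr hodd hX).trans ?_, fun heven => ?_⟩
  · gcongr
    exact le_add_of_nonneg_right (by positivity)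
  · exact abs_sum_prod_frobCoeff_sub_le hinj hp3 (fun i => (her i).imp_left fun ⟨he, hri⟩ =>
      ⟨he, hri.resolve_left fun hodd => heven ⟨i, he, hodd⟩⟩) hX

theorem stmt_18 (k : ℕ) (hk : 1 ≤ k) (ε : ℝ) (hε : 0 < ε) (hε3 : ε < 1 / 3)
    (e r : Fin k → ℕ)
    (her : ∀ i, (e i = 1 ∧ (Odd (r i) ∨ r i = 2)) ∨ (e i = 2 ∧ r i = 1)) :
    ∃ C : ℝ, 0 < C ∧ ∀ (X : ℝ), 2 ≤ X →
      ∀ (p : Fin k → ℕ) (hp : ∀ i, (p i).Prime), (∀ i, 5 ≤ p i) →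
      Function.Injective p → (∏ i, (p i : ℝ)) ≤ X ^ ((1 : ℝ) / 3 - ε) →
      ((∃ j, e j = 1 ∧ Odd (r j)) →
        |∑ᶠ AB ∈ Efam X, ∏ i, (ahatPow (p i) (hp i) AB.1 AB.2 (e i)) ^ (r i)|
          ≤ C * 2 ^ (sInf {n : ℕ | Odd n ∧ ∃ i, r i = n}) * (∏ i, (p i : ℝ))
              * X ^ ((1 : ℝ) / 2))
      ∧ (¬ (∃ j, e j = 1 ∧ Odd (r j)) →
        |(∑ᶠ AB ∈ Efam X, ∏ i, (ahatPow (p i) (hp i) AB.1 AB.2 (e i)) ^ (r i))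
            - (-1 : ℝ) ^ (Finset.univ.filter (fun j => e j = 2)).card
              * ((Efam X).ncard : ℝ)|
          ≤ C * ((∏ i, (p i : ℝ)) * X ^ ((1 : ℝ) / 2)
              + (∑ i, 1 / (p i : ℝ)) * X ^ ((5 : ℝ) / 6))) := by
  obtain ⟨C, hC, hbound⟩ := stmt_18_general e r her
  refine ⟨C, hC, fun X hX p hp h5 hinj _ => ?_⟩
  obtain ⟨hodd, heven⟩ := hbound X (one_le_two.trans hX) p hp h5 hinj
  refine ⟨fun hex => (hodd hex).trans ?_, heven⟩
  gcongr
  exact le_mul_of_one_le_right hC.le (one_le_pow₀ one_le_two)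
end
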